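/- arXiv:1103.5519 — 2 statements merged into one kernel-verified Lean document; each statement's English description precedes it below -/
import Mathlib

section
/- Let L be an odd unimodular lattice in dimension 41 having minimum norm 4. Then L has kissing number 15170 if and only if σ(L) = 17. -/
open scoped RealInnerProductSpace

noncomputable section

/-- The norm `(x, x)` of a vector `x ∈ ℝⁿ` (squared Euclidean length). -/
def normOf {n : ℕ} (x : EuclideanSpace ℝ (Fin n)) : ℝ := ⟪x, x⟫

/-- The dual `L* = {x ∈ ℝⁿ : (x,y) ∈ ℤ for all y ∈ L}` of a set of vectors. -/
def dualSet {n : ℕ} (L : Set (EuclideanSpace ℝ (Fin n))) : Set (EuclideanSpace ℝ (Fin n)) :=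
  {x | ∀ y ∈ L, ∃ m : ℤ, ⟪x, y⟫ = (m : ℝ)}

/-- `L` is a unimodular lattice: `L = L*`. -/
def IsUnimodularLattice {n : ℕ} (L : Set (EuclideanSpace ℝ (Fin n))) : Prop :=
  L = dualSet L

/-- `L` is odd: some vector of `L` has odd (integral) norm. -/
def IsOddLattice {n : ℕ} (L : Set (EuclideanSpace ℝ (Fin n))) : Prop :=
  ∃ x ∈ L, ∃ m : ℤ, Odd m ∧ normOf x = (m : ℝ)

/-- The even sublattice `L₀ = {x ∈ L : (x,x) even}`. -/
def evenSublattice {n : ℕ} (L : Set (EuclideanSpace ℝ (Fin n))) :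
    Set (EuclideanSpace ℝ (Fin n)) :=
  {x | x ∈ L ∧ ∃ m : ℤ, normOf x = 2 * (m : ℝ)}

/-- The shadow `S(L) = L₀* \ L`. -/
def shadow {n : ℕ} (L : Set (EuclideanSpace ℝ (Fin n))) : Set (EuclideanSpace ℝ (Fin n)) :=
  dualSet (evenSublattice L) \ L

/-- `L` has minimum norm `r`: `r` is the least norm among nonzero vectors of `L`. -/
def HasMinNorm {n : ℕ} (L : Set (EuclideanSpace ℝ (Fin n))) (r : ℝ) : Prop :=
  IsLeast {s : ℝ | ∃ x ∈ L, x ≠ 0 ∧ normOf x = s} r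

/-- The shadow `S(L)` has minimum norm `r`. -/
def HasShadowMinNorm {n : ℕ} (L : Set (EuclideanSpace ℝ (Fin n))) (r : ℝ) : Prop :=
  IsLeast {s : ℝ | ∃ x ∈ shadow L, normOf x = s} r

/-- `σ(L) = r`, i.e. `4 · min(S(L)) = r`. -/
def HasSigma {n : ℕ} (L : Set (EuclideanSpace ℝ (Fin n))) (r : ℝ) : Prop :=
  ∃ s : ℝ, HasShadowMinNorm L s ∧ r = 4 * s

/-- The number of vectors of norm `r` in `L`; when `L` has minimum norm `r`,
this is the kissing number of `L`. -/
def numVecsOfNorm {n : ℕ} (L : Set (EuclideanSpace ℝ (Fin n))) (r : ℝ) : ℕ :=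
  Set.ncard {x ∈ L | normOf x = r}

/-!
Let `q = exp (π i τ)`. The theta series of `L`, its twist by the signs `(-1) ^ (x, x)` and the theta
series of the shadow `S(L)` are permuted by the modular group in the same way as the powers
`θ₃ ^ 41`, `θ₄ ^ 41`, `θ₂ ^ 41` of the Jacobi theta constants. The eighth power of the product of
such a triple is a modular form of weight `12 * 41` for the full modular group, so the triple is
zero as soon as its first member has order at least `a` and its last one order at least `b` at `i∞`
with `2 * a + b > 41 / 4`.

There is an explicit triple `F`, built from the Jacobi theta constants, with
`F₀ = 1 + 15170 q ^ 4 + ⋯` and `F₂ = 104960 q ^ (17 / 4) + ⋯`. If the kissing number is `15170`,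
then the triple of `L` differs from `F` by one with `a = 5` and `b = 9 / 4`: the norms in the shadow
are congruent to `41 / 4` modulo `2` and, being at least a quarter of the minimum norm of `L`, are
at least `9 / 4`. If `σ(L) = 17`, the same holds with `a = 4` and `b = 17 / 4`. Hence either
condition forces the triple of `L` to be `F`, from which both can be read off.
-/

open Complex hiding I
open Filter Topology Asymptotics
open UpperHalfPlane hiding I
open scoped Real Manifold ModularForm MatrixGroups

section Modularity

lemma discriminant_one_vadd (τ : ℍ) :
    ModularForm.discriminant ((1 : ℝ) +ᵥ τ) = ModularForm.discriminant τ := by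
  have h := congrFun ModularForm.discriminant_T_invariant τ
  have hdenom : denom (ModularGroup.T : GL (Fin 2) ℝ) τ = 1 := by
    simpa [ModularGroup.coe_T] using ModularGroup.denom_apply ModularGroup.T τ
  rwa [ModularForm.SL_slash_apply, modular_T_smul, hdenom, one_zpow, mul_one] at h

lemma discriminant_S_smul (τ : ℍ) : ModularForm.discriminant (ModularGroup.S • τ) =
    (τ : ℂ) ^ 12 * ModularForm.discriminant τ := by
  have h := congrFun ModularForm.discriminant_S_invariant τ
  rw [ModularForm.SL_slash_apply, ModularGroup.denom_S] at h
  rw [← h, zpow_neg, zpow_ofNat]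
  have := τ.ne_zero
  field_simp

lemma tendsto_one_vadd_atImInfty : Tendsto (fun τ : ℍ => (1 : ℝ) +ᵥ τ) atImInfty atImInfty := by
  simpa [atImInfty, tendsto_comap_iff, Function.comp_def] using tendsto_comap

lemma eq_zero_of_modularInvariant {g : ℍ → ℂ} (hg : MDiff g)
    (hT : ∀ τ : ℍ, g ((1 : ℝ) +ᵥ τ) = g τ) (hS : ∀ τ : ℍ, g (ModularGroup.S • τ) = g τ)
    (hlim : Tendsto g atImInfty (𝓝 0)) : g = 0 := by
  have hTslash : g ∣[(0 : ℤ)] ModularGroup.T = g := by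
    ext τ
    rw [ModularForm.SL_slash_apply, modular_T_smul, hT, neg_zero, zpow_zero, mul_one]
  have hSslash : g ∣[(0 : ℤ)] ModularGroup.S = g := by
    ext τ
    rw [ModularForm.SL_slash_apply, hS, neg_zero, zpow_zero, mul_one]
  have hslash := SlashInvariantForm.slash_action_generators_SL2Z hSslash hTslash
  let G : ModularForm (Matrix.SpecialLinearGroup.mapGL ℝ : SL(2, ℤ) →* _).range 0 :=
    { toFun := g
      slash_action_eq' := fun _ ⟨γ, hγ⟩ => hγ ▸ hslash γ
      holo' := hg
      bdd_at_cusps' {c} hc := by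
        rw [Subgroup.IsArithmetic.isCusp_iff_isCusp_SL2Z] at hc
        rw [OnePoint.isBoundedAt_iff_forall_SL2Z hc]
        intro γ _
        rw [hslash γ]
        exact hlim.isBigO_one ℝ }
  obtain ⟨c, hc⟩ := ModularFormClass.levelOne_weight_zero_const G
  have hconst : g = Function.const _ c := hc
  have hc0 : c = 0 := tendsto_nhds_unique tendsto_const_nhds (hconst ▸ hlim)
  rw [hconst, hc0]
  rfl

lemma eq_zero_of_isLittleO_discriminant_pow (n : ℕ) {f : ℍ → ℂ} (hf : MDiff f)
    (hT : ∀ τ : ℍ, f ((1 : ℝ) +ᵥ τ) = f τ)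
    (hS : ∀ τ : ℍ, f (ModularGroup.S • τ) = (τ : ℂ) ^ (12 * n) * f τ)
    (hlim : f =o[atImInfty] fun τ => ModularForm.discriminant τ ^ n) : f = 0 := by
  have hne (τ : ℍ) : ModularForm.discriminant τ ^ n ≠ 0 :=
    pow_ne_zero n (ModularForm.discriminant_ne_zero τ)
  have hquot : (fun τ => f τ / ModularForm.discriminant τ ^ n) = 0 := by
    refine eq_zero_of_modularInvariant
      (hf.div (CuspForm.discriminant.holo'.pow n) hne) (fun τ => ?_) (fun τ => ?_)
      hlim.tendsto_div_nhds_zero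
    · rw [hT, discriminant_one_vadd]
    · rw [hS, discriminant_S_smul, mul_pow, ← pow_mul,
        mul_div_mul_left _ _ (pow_ne_zero _ τ.ne_zero)]
  ext τ
  exact (div_eq_zero_iff.mp (congrFun hquot τ)).resolve_right (hne τ)

end Modularity

section Nome

/-- The real power `q ^ r = exp (π i r τ)` of the nome `q = exp (π i τ)`, the unit in which
theta series are expanded and in which growth towards `i∞` is measured. -/
def nomePow (r : ℝ) (τ : ℍ) : ℂ := cexp (π * Complex.I * τ * r)

lemma norm_nomePow (r : ℝ) (τ : ℍ) : ‖nomePow r τ‖ = Real.exp (-π * τ.im * r) := by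
  simp [nomePow, Complex.norm_exp]

lemma nomePow_zero : nomePow 0 = 1 := by
  ext τ
  simp [nomePow]

lemma nomePow_add (r s : ℝ) : nomePow (r + s) = nomePow r * nomePow s := by
  ext τ
  simp only [nomePow, Pi.mul_apply, ← Complex.exp_add]
  push_cast
  ring_nf

lemma nomePow_natCast_mul (k : ℕ) (r : ℝ) : nomePow (k * r) = nomePow r ^ k := by
  ext τ
  simp only [nomePow, Pi.pow_apply, ← Complex.exp_nat_mul]
  push_cast
  ring_nf

lemma nomePow_one_vadd (r : ℝ) (τ : ℍ) :
    nomePow r ((1 : ℝ) +ᵥ τ) = cexp (π * Complex.I * r) * nomePow r τ := by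
  simp only [nomePow, coe_vadd, ← Complex.exp_add]
  push_cast
  ring_nf

lemma tendsto_im_atImInfty : Tendsto UpperHalfPlane.im atImInfty atTop := tendsto_comap

lemma nomePow_isLittleO {r s : ℝ} (h : s < r) : nomePow r =o[atImInfty] nomePow s := by
  rw [← isLittleO_norm_norm]
  simp only [norm_nomePow]
  rw [Real.isLittleO_exp_comp_exp_comp]
  have hdiff : (fun τ : ℍ => -π * τ.im * s - -π * τ.im * r) = fun τ => π * (r - s) * τ.im := by
    ext τ
    ring
  rw [hdiff]
  exact tendsto_im_atImInfty.const_mul_atTop (mul_pos Real.pi_pos (sub_pos.mpr h))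

lemma nomePow_isBigO {r s : ℝ} (h : s ≤ r) : nomePow r =O[atImInfty] nomePow s := by
  rcases h.eq_or_lt with rfl | h
  · exact isBigO_refl _ _
  · exact (nomePow_isLittleO h).isBigO

lemma not_nomePow_isBigO {r s : ℝ} (h : s < r) : ¬ nomePow s =O[atImInfty] nomePow r := by
  intro hO
  refine (nomePow_isLittleO h).not_isBigO (Eventually.frequently ?_) hO
  exact .of_forall fun τ => Complex.exp_ne_zero _

lemma isBigO_nomePow_comp_one_vadd {f : ℍ → ℂ} {r : ℝ} (hf : f =O[atImInfty] nomePow r) :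
    (fun τ : ℍ => f ((1 : ℝ) +ᵥ τ)) =O[atImInfty] nomePow r := by
  refine (hf.comp_tendsto tendsto_one_vadd_atImInfty).trans (.of_bound' (.of_forall fun τ => ?_))
  simp [norm_nomePow]

lemma nomePow_isBigO_discriminant_pow (n : ℕ) :
    nomePow (2 * n) =O[atImInfty] fun τ => ModularForm.discriminant τ ^ n := by
  refine IsBigO.trans (.of_bound' (.of_forall fun τ => ?_))
    (ModularForm.exp_isBigO_discriminant.pow n)
  rw [norm_nomePow, norm_pow, Real.norm_of_nonneg (Real.exp_pos _).le, ← Real.exp_nat_mul]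
  ring_nf
  rfl

end Nome

section ThetaTriples

/-- The weight `1/2` automorphy factor `(-iτ)^{1/2}` (principal branch) of theta functions under
`τ ↦ -1/τ`. -/
def thetaFactor (τ : ℍ) : ℂ := (-Complex.I * τ) ^ (1 / 2 : ℂ)

lemma thetaFactor_sq (τ : ℍ) : thetaFactor τ ^ 2 = -Complex.I * τ := by
  rw [thetaFactor, ← Complex.cpow_nat_mul]
  norm_num

lemma thetaFactor_ne_zero (τ : ℍ) : thetaFactor τ ≠ 0 := by
  intro h
  simpa [h, τ.ne_zero] using thetaFactor_sq τ

lemma thetaFactor_pow_eight (τ : ℍ) : thetaFactor τ ^ 8 = (τ : ℂ) ^ 4 := by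
  rw [show 8 = 2 * 4 from rfl, pow_mul, thetaFactor_sq, mul_pow, neg_pow, Complex.I_pow_four]
  ring

lemma coe_S_smul (τ : ℍ) : ((ModularGroup.S • τ : ℍ) : ℂ) = -1 / (τ : ℂ) := by
  rw [modular_S_smul]
  simp [neg_div, inv_neg]

lemma S_smul_S_smul (τ : ℍ) : ModularGroup.S • ModularGroup.S • τ = τ := by
  ext
  rw [coe_S_smul, coe_S_smul]
  have := τ.ne_zero
  field_simp

lemma thetaFactor_S_smul_mul (τ : ℍ) : thetaFactor (ModularGroup.S • τ) * thetaFactor τ = 1 := by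
  have hre : ∀ z : ℍ, 0 < (-Complex.I * (z : ℂ)).re := fun z => by simpa using z.im_pos
  have hinv : -Complex.I * ((ModularGroup.S • τ : ℍ) : ℂ) = (-Complex.I * (τ : ℂ))⁻¹ := by
    have := τ.ne_zero
    rw [coe_S_smul]
    field_simp
    linear_combination Complex.I_sq
  have harg : (-Complex.I * (τ : ℂ)).arg ≠ π := fun h => by
    have h0 := (Complex.arg_eq_pi_iff.mp h).1
    linarith [hre τ]
  rw [thetaFactor, hinv, Complex.inv_cpow _ _ harg]
  exact inv_mul_cancel₀ (thetaFactor_ne_zero τ)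

/-- A triple of holomorphic functions on the upper half-plane which transforms like the `n`-th
powers of the Jacobi theta constants `(θ₃, θ₄, θ₂)`: the generators `T` and `S` of the modular group
permute the three functions, up to the factor `(-iτ)^{n/2}` for `S` and the multiplier `ε` with
which `T` acts on the third one (which is `exp (π i / 4)` for `θ₂`). -/
structure IsThetaTriple (n : ℕ) (ε : ℂ) (F : Fin 3 → ℍ → ℂ) : Prop where
  mdifferentiable : ∀ i, MDiff (F i)
  T_zero : ∀ τ : ℍ, F 0 ((1 : ℝ) +ᵥ τ) = F 1 τ
  T_one : ∀ τ : ℍ, F 1 ((1 : ℝ) +ᵥ τ) = F 0 τ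
  T_two : ∀ τ : ℍ, F 2 ((1 : ℝ) +ᵥ τ) = ε * F 2 τ
  S_zero : ∀ τ : ℍ, F 0 (ModularGroup.S • τ) = thetaFactor τ ^ n * F 0 τ
  S_one : ∀ τ : ℍ, F 1 (ModularGroup.S • τ) = thetaFactor τ ^ n * F 2 τ
  S_two : ∀ τ : ℍ, F 2 (ModularGroup.S • τ) = thetaFactor τ ^ n * F 1 τ

namespace IsThetaTriple

variable {m n : ℕ} {ε ε' : ℂ} {F G : Fin 3 → ℍ → ℂ}

lemma sub (hF : IsThetaTriple n ε F) (hG : IsThetaTriple n ε G) : IsThetaTriple n ε (F - G) where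
  mdifferentiable i := (hF.mdifferentiable i).sub (hG.mdifferentiable i)
  T_zero τ := by simp only [Pi.sub_apply, hF.T_zero, hG.T_zero]
  T_one τ := by simp only [Pi.sub_apply, hF.T_one, hG.T_one]
  T_two τ := by simp only [Pi.sub_apply, hF.T_two, hG.T_two, mul_sub]
  S_zero τ := by simp only [Pi.sub_apply, hF.S_zero, hG.S_zero, mul_sub]
  S_one τ := by simp only [Pi.sub_apply, hF.S_one, hG.S_one, mul_sub]
  S_two τ := by simp only [Pi.sub_apply, hF.S_two, hG.S_two, mul_sub]

lemma const_smul (hF : IsThetaTriple n ε F) (c : ℂ) : IsThetaTriple n ε (c • F) where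
  mdifferentiable i := (hF.mdifferentiable i).const_smul c
  T_zero τ := by simp only [Pi.smul_apply, smul_eq_mul, hF.T_zero]
  T_one τ := by simp only [Pi.smul_apply, smul_eq_mul, hF.T_one]
  T_two τ := by simp only [Pi.smul_apply, smul_eq_mul, hF.T_two, mul_left_comm]
  S_zero τ := by simp only [Pi.smul_apply, smul_eq_mul, hF.S_zero, mul_left_comm]
  S_one τ := by simp only [Pi.smul_apply, smul_eq_mul, hF.S_one, mul_left_comm]
  S_two τ := by simp only [Pi.smul_apply, smul_eq_mul, hF.S_two, mul_left_comm]

lemma add (hF : IsThetaTriple n ε F) (hG : IsThetaTriple n ε G) : IsThetaTriple n ε (F + G) := by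
  simpa using hF.sub (hG.const_smul (-1))

lemma mul (hF : IsThetaTriple m ε F) (hG : IsThetaTriple n ε' G) :
    IsThetaTriple (m + n) (ε * ε') (F * G) where
  mdifferentiable i := (hF.mdifferentiable i).mul (hG.mdifferentiable i)
  T_zero τ := by simp only [Pi.mul_apply, hF.T_zero, hG.T_zero]
  T_one τ := by simp only [Pi.mul_apply, hF.T_one, hG.T_one]
  T_two τ := by simp only [Pi.mul_apply, hF.T_two, hG.T_two, mul_mul_mul_comm]
  S_zero τ := by simp only [Pi.mul_apply, hF.S_zero, hG.S_zero, pow_add, mul_mul_mul_comm]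
  S_one τ := by simp only [Pi.mul_apply, hF.S_one, hG.S_one, pow_add, mul_mul_mul_comm]
  S_two τ := by simp only [Pi.mul_apply, hF.S_two, hG.S_two, pow_add, mul_mul_mul_comm]

lemma pow (hF : IsThetaTriple n ε F) (k : ℕ) : IsThetaTriple (n * k) (ε ^ k) (F ^ k) where
  mdifferentiable i := (hF.mdifferentiable i).pow k
  T_zero τ := by simp only [Pi.pow_apply, hF.T_zero]
  T_one τ := by simp only [Pi.pow_apply, hF.T_one]
  T_two τ := by simp only [Pi.pow_apply, hF.T_two, mul_pow]
  S_zero τ := by simp only [Pi.pow_apply, hF.S_zero, mul_pow, pow_mul]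
  S_one τ := by simp only [Pi.pow_apply, hF.S_one, mul_pow, pow_mul]
  S_two τ := by simp only [Pi.pow_apply, hF.S_two, mul_pow, pow_mul]

-- Compares the values of `F 2` at the two sides of `STS τ = T⁻¹ST⁻¹ τ`.
lemma multiplier_mul_eq (hF : IsThetaTriple n ε F) (τ : ℍ) :
    ε * (thetaFactor τ * thetaFactor ((1 : ℝ) +ᵥ ModularGroup.S • τ)) ^ n * F 0 τ =
      thetaFactor ((-1 : ℝ) +ᵥ τ) ^ n * F 0 τ := by
  set σ : ℍ := ModularGroup.S • ((-1 : ℝ) +ᵥ τ)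
  have hrel : ModularGroup.S • ((1 : ℝ) +ᵥ ModularGroup.S • τ) = (-1 : ℝ) +ᵥ σ := by
    have h0 := τ.ne_zero
    have h1 : (τ : ℂ) - 1 ≠ 0 := by
      simpa [sub_eq_neg_add] using ((-1 : ℝ) +ᵥ τ).ne_zero
    ext
    simp only [σ, coe_S_smul, coe_vadd]
    push_cast
    rw [show (1 : ℂ) + -1 / τ = (τ - 1) / τ by field_simp; ring,
      neg_add_eq_sub 1 (τ : ℂ)]
    field_simp
    ring
  calc _ = ε * F 2 ((-1 : ℝ) +ᵥ σ) := by
        rw [← hrel, hF.S_two, hF.T_one, hF.S_zero, mul_pow]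
        ring
    _ = F 2 σ := by rw [← hF.T_two, vadd_vadd]; simp
    _ = thetaFactor ((-1 : ℝ) +ᵥ τ) ^ n * F 0 τ := by
        rw [hF.S_two, ← hF.T_zero, vadd_vadd]
        simp

theorem multiplier_eq (hF : IsThetaTriple m ε F) (hG : IsThetaTriple 1 ε' G) {τ : ℍ}
    (hFτ : F 0 τ ≠ 0) (hGτ : G 0 τ ≠ 0) : ε = ε' ^ m := by
  have h1 := mul_right_cancel₀ hFτ (hF.multiplier_mul_eq τ)
  have h2 := mul_right_cancel₀ hGτ (hG.multiplier_mul_eq τ)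
  rw [pow_one, pow_one] at h2
  rw [← h2, mul_pow ε'] at h1
  exact mul_right_cancel₀ (pow_ne_zero m
    (mul_ne_zero (thetaFactor_ne_zero _) (thetaFactor_ne_zero _))) h1

lemma apply_zero_eq_zero_iff (hF : IsThetaTriple n ε F) : F 0 = 0 ↔ F 1 = 0 := by
  constructor <;> intro h <;> ext τ
  · rw [← hF.T_zero, h, Pi.zero_apply, Pi.zero_apply]
  · rw [← hF.T_one, h, Pi.zero_apply, Pi.zero_apply]

lemma apply_one_eq_zero_iff (hF : IsThetaTriple n ε F) : F 1 = 0 ↔ F 2 = 0 := by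
  have hfac (τ : ℍ) := pow_ne_zero n (thetaFactor_ne_zero τ)
  constructor <;> intro h <;> ext τ
  · simpa [h, hfac] using hF.S_one τ
  · simpa [h, hfac] using hF.S_two τ

lemma prod_pow_eight_eq_zero (hF : IsThetaTriple n ε F) (hε : ε ^ 8 = 1)
    (hlim : ((F 0 * F 1 * F 2) ^ 8) =o[atImInfty] fun τ => ModularForm.discriminant τ ^ n) :
    F 0 * F 1 * F 2 = 0 := by
  refine pow_eq_zero_iff (n := 8) (by norm_num) |>.mp
    (eq_zero_of_isLittleO_discriminant_pow n ?_ (fun τ => ?_) (fun τ => ?_) hlim)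
  · exact (((hF.mdifferentiable 0).mul (hF.mdifferentiable 1)).mul (hF.mdifferentiable 2)).pow 8
  · simp only [Pi.pow_apply, Pi.mul_apply, hF.T_zero, hF.T_one, hF.T_two]
    linear_combination (F 0 τ * F 1 τ * F 2 τ) ^ 8 * hε
  · simp only [Pi.pow_apply, Pi.mul_apply, hF.S_zero, hF.S_one, hF.S_two]
    have hfac : (thetaFactor τ ^ n) ^ 24 = (τ : ℂ) ^ (12 * n) := by
      rw [← pow_mul, show n * 24 = 8 * (3 * n) by ring, pow_mul, thetaFactor_pow_eight, ← pow_mul]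
      ring_nf
    linear_combination (F 0 τ * F 1 τ * F 2 τ) ^ 8 * hfac

-- The product of the three functions has weight `3n/2`, so its eighth power, of weight `12n`,
-- cannot vanish at `i∞` to higher order than `Δ ^ n`.
theorem eq_zero_of_isBigO (hF : IsThetaTriple n ε F) (hε : ε ^ 8 = 1) {a b : ℝ}
    (h0 : F 0 =O[atImInfty] nomePow a) (h2 : F 2 =O[atImInfty] nomePow b)
    (hab : (n : ℝ) / 4 < 2 * a + b) : F = 0 := by
  have h1 : F 1 =O[atImInfty] nomePow a := by
    simpa only [hF.T_zero] using isBigO_nomePow_comp_one_vadd h0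
  have hlim : ((F 0 * F 1 * F 2) ^ 8) =o[atImInfty] fun τ => ModularForm.discriminant τ ^ n := by
    have hO : ((F 0 * F 1 * F 2) ^ 8) =O[atImInfty] nomePow ((8 : ℕ) * (a + a + b)) := by
      rw [nomePow_natCast_mul, nomePow_add, nomePow_add]
      exact ((h0.mul h1).mul h2).pow 8
    refine (hO.trans_isLittleO (nomePow_isLittleO ?_)).trans_isBigO
      (nomePow_isBigO_discriminant_pow n)
    push_cast
    linarith
  have hprod := hF.prod_pow_eight_eq_zero hε hlim
  rw [UpperHalfPlane.mul_eq_zero_iff ((hF.mdifferentiable 0).mul (hF.mdifferentiable 1))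
      (hF.mdifferentiable 2),
    UpperHalfPlane.mul_eq_zero_iff (hF.mdifferentiable 0) (hF.mdifferentiable 1),
    hF.apply_zero_eq_zero_iff, or_self, hF.apply_one_eq_zero_iff, or_self] at hprod
  have hone := hF.apply_one_eq_zero_iff.mpr hprod
  ext i : 1
  fin_cases i
  exacts [hF.apply_zero_eq_zero_iff.mpr hone, hone, hprod]

end IsThetaTriple

end ThetaTriples

section ThetaSeries

variable {ι : Type*} {N : ι → ℝ}

/-- A family of nonnegative exponents `N i` whose theta series `∑ q ^ N i` converges on the upper
half-plane. -/
structure IsThetaFamily (N : ι → ℝ) : Prop where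
  nonneg : ∀ i, 0 ≤ N i
  summable : ∀ t : ℝ, 0 < t → Summable fun i => Real.exp (-π * t * N i)

/-- The theta series `∑ q ^ N i` in the nome `q = exp (π i τ)`. -/
def thetaSeries (N : ι → ℝ) (τ : ℍ) : ℂ := ∑' i, nomePow (N i) τ

lemma norm_nomePow_le_norm_thetaSeries (hN : IsThetaFamily N) {τ : ℍ} (hτ : τ.re = 0) (i : ι) :
    ‖nomePow (N i) τ‖ ≤ ‖thetaSeries N τ‖ := by
  have hreal (j : ι) : nomePow (N j) τ = (Real.exp (-π * τ.im * N j) : ℝ) := by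
    have hcoe : (τ : ℂ) = Complex.I * (τ.im : ℝ) := by
      apply Complex.ext <;> simp [hτ]
    rw [nomePow, hcoe]
    push_cast
    congr 1
    linear_combination (π * τ.im * N j : ℂ) * Complex.I_mul_I
  rw [norm_nomePow, thetaSeries, tsum_congr hreal, ← Complex.ofReal_tsum, Complex.norm_real,
    Real.norm_of_nonneg (tsum_nonneg fun j => (Real.exp_pos _).le)]
  exact (hN.summable _ τ.im_pos).le_tsum i fun j _ => (Real.exp_pos _).le

lemma thetaSeries_I_ne_zero [Nonempty ι] (hN : IsThetaFamily N) :
    thetaSeries N UpperHalfPlane.I ≠ 0 := by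
  obtain ⟨i⟩ := ‹Nonempty ι›
  rw [← norm_pos_iff]
  exact (norm_pos_iff.mpr (Complex.exp_ne_zero _)).trans_le
    (norm_nomePow_le_norm_thetaSeries hN UpperHalfPlane.I_re i)

namespace IsThetaFamily

lemma summable_nomePow (hN : IsThetaFamily N) (τ : ℍ) : Summable fun i => nomePow (N i) τ := by
  refine Summable.of_norm ?_
  simpa only [norm_nomePow] using hN.summable _ τ.im_pos

lemma mdifferentiable_thetaSeries (hN : IsThetaFamily N) : MDiff (thetaSeries N) := by
  rw [UpperHalfPlane.mdifferentiable_iff]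
  suffices h : DifferentiableOn ℂ (fun z : ℂ => ∑' i, cexp (π * Complex.I * z * N i))
      {z | 0 < z.im} by
    refine h.congr fun z hz => ?_
    simp [thetaSeries, nomePow, ofComplex_apply_of_im_pos hz]
  intro z (hz : 0 < z.im)
  have hopen : IsOpen {w : ℂ | z.im / 2 < w.im} := isOpen_lt continuous_const continuous_im
  have hdiff : DifferentiableOn ℂ (fun z : ℂ => ∑' i, cexp (π * Complex.I * z * N i))
      {w : ℂ | z.im / 2 < w.im} := by
    refine Complex.differentiableOn_tsum_of_summable_norm (hN.summable (z.im / 2) (by positivity))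
      (fun i => by fun_prop) hopen fun i w (hw : z.im / 2 < w.im) => ?_
    have hle := mul_le_mul_of_nonneg_left (mul_le_mul_of_nonneg_right hw.le (hN.nonneg i))
      Real.pi_pos.le
    have hre : (π * Complex.I * w * N i).re = -(π * (w.im * N i)) := by
      simp [mul_assoc]
    rw [Complex.norm_exp, Real.exp_le_exp, hre]
    linarith
  exact (hdiff.differentiableAt (hopen.mem_nhds (half_lt_self hz))).differentiableWithinAt

lemma isBigO_sub_sum (hN : IsThetaFamily N) (s : Finset ι) {r : ℝ} (hs : ∀ i ∉ s, r ≤ N i) :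
    (thetaSeries N - ∑ i ∈ s, nomePow (N i)) =O[atImInfty] nomePow r := by
  have hsum1 : Summable fun i : {i // i ∉ s} => Real.exp (-π * 1 * N i) :=
    (hN.summable 1 one_pos).subtype _
  refine IsBigO.of_bound (Real.exp (π * r) * ∑' i : {i // i ∉ s}, Real.exp (-π * 1 * N i)) ?_
  filter_upwards [tendsto_im_atImInfty.eventually_ge_atTop 1] with τ hτ
  have htail : (thetaSeries N - ∑ i ∈ s, nomePow (N i)) τ =
      ∑' i : {i // i ∉ s}, nomePow (N i) τ := by
    rw [Pi.sub_apply, Finset.sum_apply, thetaSeries,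
      ← (hN.summable_nomePow τ).sum_add_tsum_subtype_compl s, add_sub_cancel_left]
  have hbound (i : {i // i ∉ s}) : ‖nomePow (N i) τ‖ ≤
      Real.exp (π * r) * ‖nomePow r τ‖ * Real.exp (-π * 1 * N i) := by
    rw [norm_nomePow, norm_nomePow, ← Real.exp_add, ← Real.exp_add, Real.exp_le_exp]
    have hnonneg := mul_nonneg Real.pi_pos.le
      (mul_nonneg (sub_nonneg.mpr hτ) (sub_nonneg.mpr (hs i i.2)))
    linarith
  rw [htail]
  refine (tsum_of_norm_bounded (hsum1.mul_left _).hasSum hbound).trans_eq ?_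
  rw [tsum_mul_left]
  ring

theorem isBigO_thetaSeries_iff (hN : IsThetaFamily N) {r : ℝ} :
    thetaSeries N =O[atImInfty] nomePow r ↔ ∀ i, r ≤ N i := by
  refine ⟨fun hO i => ?_, fun hr => ?_⟩
  · by_contra! hlt
    have hlittle := (hO.trans_isLittleO (nomePow_isLittleO hlt)).bound one_half_pos
    obtain ⟨A, hA⟩ := (atImInfty_mem _).mp hlittle
    let τ : ℍ := ⟨(max A 1 : ℝ) * Complex.I, by simp⟩
    have hτ : ‖thetaSeries N τ‖ ≤ 1 / 2 * ‖nomePow (N i) τ‖ := hA τ (by simp [τ, ← coe_im])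
    have hle := norm_nomePow_le_norm_thetaSeries hN (τ := τ) (by simp [τ, ← coe_re]) i
    have hpos : 0 < ‖nomePow (N i) τ‖ := norm_pos_iff.mpr (Complex.exp_ne_zero _)
    linarith
  · simpa using hN.isBigO_sub_sum ∅ fun i _ => hr i

lemma isBoundedAtImInfty_thetaSeries (hN : IsThetaFamily N) :
    IsBoundedAtImInfty (thetaSeries N) :=
  (hN.isBigO_thetaSeries_iff.mpr hN.nonneg).trans
    (isBigO_of_le _ fun τ => by simp [nomePow_zero])

lemma finite_setOf_le (hN : IsThetaFamily N) (r : ℝ) : {i | N i ≤ r}.Finite := by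
  have hlim := (hN.summable 1 one_pos).tendsto_cofinite_zero
  refine (eventually_cofinite.mp (hlim.eventually_lt_const (Real.exp_pos (-π * 1 * r)))).subset
    fun i (hi : N i ≤ r) => ?_
  have hmul := mul_le_mul_of_nonneg_left hi Real.pi_pos.le
  exact not_lt.mpr (Real.exp_le_exp.mpr (by linarith))

end IsThetaFamily

end ThetaSeries

section ThetaTripleOfSeries

variable {ι κ : Type*} {N : ι → ℝ} {M : κ → ℝ}

/-- The triple `(θ_N, θ_N(τ + 1), θ_M)` of theta series. -/
def thetaTriple (N : ι → ℝ) (M : κ → ℝ) : Fin 3 → ℍ → ℂ :=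
  ![thetaSeries N, fun τ => thetaSeries N ((1 : ℝ) +ᵥ τ), thetaSeries M]

lemma exp_pi_mul_I_mul_two_mul_intCast (k : ℤ) : cexp (π * Complex.I * (2 * k)) = 1 :=
  Complex.exp_eq_one_iff.mpr ⟨k, by ring⟩

lemma thetaSeries_one_vadd {r : ℝ} (hM : ∀ i, ∃ k : ℤ, M i = r + 2 * k) (τ : ℍ) :
    thetaSeries M ((1 : ℝ) +ᵥ τ) = cexp (π * Complex.I * r) * thetaSeries M τ := by
  rw [thetaSeries, thetaSeries, ← tsum_mul_left]
  refine tsum_congr fun i => ?_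
  obtain ⟨k, hk⟩ := hM i
  rw [nomePow_one_vadd, hk]
  push_cast
  rw [mul_add, Complex.exp_add, exp_pi_mul_I_mul_two_mul_intCast, mul_one]

lemma thetaSeries_one_vadd_one_vadd (hN : ∀ i, ∃ k : ℤ, N i = k) (τ : ℍ) :
    thetaSeries N ((1 : ℝ) +ᵥ (1 : ℝ) +ᵥ τ) = thetaSeries N τ := by
  refine tsum_congr fun i => ?_
  obtain ⟨k, hk⟩ := hN i
  rw [nomePow_one_vadd, nomePow_one_vadd, ← mul_assoc, ← Complex.exp_add, ← mul_add, hk,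
    Complex.ofReal_intCast, ← two_mul, exp_pi_mul_I_mul_two_mul_intCast, one_mul]

lemma mdifferentiable_one_vadd : MDiff fun τ : ℍ => (1 : ℝ) +ᵥ τ := by
  simp only [← modular_T_smul]
  exact mdifferentiable_smul (g := (ModularGroup.T : GL (Fin 2) ℝ)) (by simp)

theorem isThetaTriple_thetaTriple {n : ℕ} {r : ℝ} (hN : IsThetaFamily N) (hM : IsThetaFamily M)
    (hNint : ∀ i, ∃ k : ℤ, N i = k) (hMmod : ∀ i, ∃ k : ℤ, M i = r + 2 * k)
    (hNS : ∀ τ, thetaSeries N (ModularGroup.S • τ) = thetaFactor τ ^ n * thetaSeries N τ)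
    (hMS : ∀ τ, thetaSeries M (ModularGroup.S • τ) =
      thetaFactor τ ^ n * thetaSeries N ((1 : ℝ) +ᵥ τ)) :
    IsThetaTriple n (cexp (π * Complex.I * r)) (thetaTriple N M) where
  mdifferentiable i := by
    fin_cases i
    · exact hN.mdifferentiable_thetaSeries
    · exact hN.mdifferentiable_thetaSeries.comp mdifferentiable_one_vadd
    · exact hM.mdifferentiable_thetaSeries
  T_zero _ := rfl
  T_one τ := thetaSeries_one_vadd_one_vadd hNint τ
  T_two τ := thetaSeries_one_vadd hMmod τ
  S_zero := hNS
  S_one τ := by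
    change thetaSeries N _ = _ * thetaSeries M τ
    have hM' := hMS (ModularGroup.S • τ)
    rw [S_smul_S_smul] at hM'
    rw [hM', ← mul_assoc, ← mul_pow, mul_comm (thetaFactor τ), thetaFactor_S_smul_mul, one_pow,
      one_mul]
  S_two := hMS

end ThetaTripleOfSeries

section Jacobi

lemma isThetaFamily_intCast_add_sq (c : ℝ) : IsThetaFamily fun k : ℤ => ((k : ℝ) + c) ^ 2 where
  nonneg _ := sq_nonneg _
  summable t ht := by
    have hsum := ((summable_jacobiTheta₂_term_iff (c * (t * Complex.I)) (t * Complex.I)).mpr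
      (by simpa using ht)).norm
    refine (hsum.mul_left (Real.exp (-π * t * c ^ 2))).congr fun k => ?_
    rw [norm_jacobiTheta₂_term, ← Real.exp_add]
    simp only [Complex.im_ofReal_mul, Complex.I_im]
    ring_nf

lemma thetaSeries_intCast_add_sq (c : ℝ) (τ : ℍ) :
    thetaSeries (fun k : ℤ => ((k : ℝ) + c) ^ 2) τ =
      cexp (π * Complex.I * τ * c ^ 2) * jacobiTheta₂ (c * τ) τ := by
  rw [thetaSeries, jacobiTheta₂, ← tsum_mul_left]
  refine tsum_congr fun k => ?_
  rw [nomePow, jacobiTheta₂_term, ← Complex.exp_add]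
  push_cast
  ring_nf

lemma thetaSeries_intCast_add_sq_S_smul (c : ℝ) (τ : ℍ) :
    thetaSeries (fun k : ℤ => ((k : ℝ) + c) ^ 2) (ModularGroup.S • τ) =
      thetaFactor τ * jacobiTheta₂ c τ := by
  have hτ := thetaFactor_ne_zero τ
  rw [thetaSeries_intCast_add_sq, jacobiTheta₂_functional_equation c τ, ← thetaFactor, coe_S_smul,
    ← jacobiTheta₂_neg_left]
  field_simp

lemma thetaSeries_intCast_sq (τ : ℍ) :
    thetaSeries (fun k : ℤ => (k : ℝ) ^ 2) τ = jacobiTheta₂ 0 τ := by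
  simpa using thetaSeries_intCast_add_sq 0 τ

lemma thetaSeries_intCast_sq_one_vadd (τ : ℍ) :
    thetaSeries (fun k : ℤ => (k : ℝ) ^ 2) ((1 : ℝ) +ᵥ τ) = jacobiTheta₂ (1 / 2) τ := by
  rw [thetaSeries, jacobiTheta₂]
  refine tsum_congr fun k => ?_
  obtain ⟨l, hl⟩ := Int.even_mul_pred_self k
  have hsq : (k : ℂ) ^ 2 = k + 2 * l := by
    exact_mod_cast (by linear_combination hl : k ^ 2 = k + 2 * l)
  rw [nomePow_one_vadd, nomePow, jacobiTheta₂_term, ← Complex.exp_add,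
    Complex.exp_eq_exp_iff_exists_int]
  refine ⟨l, ?_⟩
  push_cast
  linear_combination (π * Complex.I) * hsq

/-- The triple `(θ₃, θ₄, θ₂)` of Jacobi theta constants. -/
def jacobiTriple : Fin 3 → ℍ → ℂ :=
  thetaTriple (fun k : ℤ => (k : ℝ) ^ 2) (fun k : ℤ => ((k : ℝ) + 1 / 2) ^ 2)

lemma isThetaFamily_intCast_sq : IsThetaFamily fun k : ℤ => (k : ℝ) ^ 2 := by
  simpa using isThetaFamily_intCast_add_sq 0

/-- The multiplier `exp (π i / 4)` of the Jacobi theta constants. -/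
def jacobiMultiplier : ℂ := cexp (π * Complex.I * (1 / 4 : ℝ))

lemma jacobiMultiplier_pow_four : jacobiMultiplier ^ 4 = -1 := by
  rw [jacobiMultiplier, ← Complex.exp_nat_mul, ← Complex.exp_pi_mul_I]
  push_cast
  ring_nf

theorem isThetaTriple_jacobiTriple : IsThetaTriple 1 jacobiMultiplier jacobiTriple := by
  refine isThetaTriple_thetaTriple isThetaFamily_intCast_sq (isThetaFamily_intCast_add_sq _)
    (fun k => ⟨k ^ 2, by push_cast; rfl⟩) (fun k => ?_) (fun τ => ?_) (fun τ => ?_)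
  · obtain ⟨l, hl⟩ := Int.even_mul_succ_self k
    refine ⟨l, ?_⟩
    have hl' : (k : ℝ) * (k + 1) = l + l := by exact_mod_cast hl
    linear_combination hl'
  · simpa [thetaSeries_intCast_sq] using thetaSeries_intCast_add_sq_S_smul 0 τ
  · rw [thetaSeries_intCast_add_sq_S_smul, thetaSeries_intCast_sq_one_vadd, pow_one]
    norm_num

end Jacobi

section ExtremalTriple

/-- The weight `8n` companion `((F₁F₂)⁴, -(F₀F₂)⁴, -(F₀F₁)⁴) / 16` of a weight `n` theta triple;
for the Jacobi triple its first component is the theta series `q - 8q² + ⋯` denoted `Δ₈` in the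
theory of unimodular lattices. -/
def discTriple (F : Fin 3 → ℍ → ℂ) : Fin 3 → ℍ → ℂ :=
  ![(1 / 16 : ℂ) • (F 1 * F 2) ^ 4, -(1 / 16 : ℂ) • (F 0 * F 2) ^ 4,
    -(1 / 16 : ℂ) • (F 0 * F 1) ^ 4]

lemma IsThetaTriple.discTriple {n : ℕ} {ε : ℂ} {F : Fin 3 → ℍ → ℂ} (hF : IsThetaTriple n ε F)
    (hε : ε ^ 4 = -1) : IsThetaTriple (8 * n) 1 (discTriple F) where
  mdifferentiable i := by
    have hmul (j k : Fin 3) := ((hF.mdifferentiable j).mul (hF.mdifferentiable k)).pow 4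
    fin_cases i
    exacts [(hmul 1 2).const_smul _, (hmul 0 2).const_smul _, (hmul 0 1).const_smul _]
  T_zero τ := by
    change (1 / 16 : ℂ) * (F 1 _ * F 2 _) ^ 4 = -(1 / 16 : ℂ) * (F 0 τ * F 2 τ) ^ 4
    rw [hF.T_one, hF.T_two]
    linear_combination (F 0 τ * F 2 τ) ^ 4 / 16 * hε
  T_one τ := by
    change -(1 / 16 : ℂ) * (F 0 _ * F 2 _) ^ 4 = (1 / 16 : ℂ) * (F 1 τ * F 2 τ) ^ 4
    rw [hF.T_zero, hF.T_two]
    linear_combination -(F 1 τ * F 2 τ) ^ 4 / 16 * hε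
  T_two τ := by
    change -(1 / 16 : ℂ) * (F 0 _ * F 1 _) ^ 4 = 1 * (-(1 / 16 : ℂ) * (F 0 τ * F 1 τ) ^ 4)
    rw [hF.T_zero, hF.T_one]
    ring
  S_zero τ := by
    change (1 / 16 : ℂ) * (F 1 _ * F 2 _) ^ 4 = _ * ((1 / 16 : ℂ) * (F 1 τ * F 2 τ) ^ 4)
    rw [hF.S_one, hF.S_two]
    ring
  S_one τ := by
    change -(1 / 16 : ℂ) * (F 0 _ * F 2 _) ^ 4 = _ * (-(1 / 16 : ℂ) * (F 0 τ * F 1 τ) ^ 4)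
    rw [hF.S_zero, hF.S_two]
    ring
  S_two τ := by
    change -(1 / 16 : ℂ) * (F 0 _ * F 1 _) ^ 4 = _ * (-(1 / 16 : ℂ) * (F 0 τ * F 2 τ) ^ 4)
    rw [hF.S_zero, hF.S_one]
    ring

lemma isThetaTriple_jacobiTriple_pow_mul_discTriple_pow (k j : ℕ) :
    IsThetaTriple (k + 8 * j) (jacobiMultiplier ^ (k + 8 * j))
      (jacobiTriple ^ k * discTriple jacobiTriple ^ j) := by
  have hpow8 : jacobiMultiplier ^ (8 * j) = 1 ^ j := by
    rw [pow_mul, show 8 = 4 * 2 from rfl, pow_mul _ 4, jacobiMultiplier_pow_four, neg_one_sq]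
  have hdisc := isThetaTriple_jacobiTriple.discTriple jacobiMultiplier_pow_four
  simpa only [one_mul, mul_one, pow_add, hpow8] using
    (isThetaTriple_jacobiTriple.pow k).mul (hdisc.pow j)

/-- The theta triple of weight `41` that an odd unimodular lattice of dimension `41` with minimum
norm `4` has if its shadow has minimum norm `17 / 4`. The coefficients are the unique ones for which
`q`, `q²` and `q³` cancel in the first component; the absence of `θ₃ ^ 9 Δ₈ ^ 4` and `θ₃ Δ₈ ^ 5`
makes the third component vanish to order `17 / 4`. -/
def extremalTriple : Fin 3 → ℍ → ℂ :=
  jacobiTriple ^ 41 - (82 : ℂ) • (jacobiTriple ^ 33 * discTriple jacobiTriple ^ 1) +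
    (1476 : ℂ) • (jacobiTriple ^ 25 * discTriple jacobiTriple ^ 2) -
    (3280 : ℂ) • (jacobiTriple ^ 17 * discTriple jacobiTriple ^ 3)

theorem isThetaTriple_extremalTriple :
    IsThetaTriple 41 (jacobiMultiplier ^ 41) extremalTriple := by
  have hmon := isThetaTriple_jacobiTriple_pow_mul_discTriple_pow
  exact ((((by simpa using hmon 41 0 : IsThetaTriple 41 _ (jacobiTriple ^ 41)).sub
    ((hmon 33 1).const_smul 82)).add ((hmon 25 2).const_smul 1476)).sub
    ((hmon 17 3).const_smul 3280))

end ExtremalTriple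

section Expansions

/-- The ideal of functions of order at least `r` at `i∞`; expansions are computed modulo it. -/
def vanishingIdeal (r : ℝ) : Ideal (boundedAtImInftySubalgebra ℂ) where
  carrier := {f | (f : ℍ → ℂ) =O[atImInfty] nomePow r}
  zero_mem' := isBigO_zero _ _
  add_mem' hf hg := hf.add hg
  smul_mem' c f hf := by
    have hc : (c : ℍ → ℂ) =O[atImInfty] fun _ => (1 : ℂ) := c.2.trans (isBigO_of_le _ (by simp))
    have hf : (f : ℍ → ℂ) =O[atImInfty] nomePow r := hf
    exact (hc.mul hf).trans (isBigO_of_le _ fun τ => by simp)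

lemma mk_eq_mk_iff_isBigO {r : ℝ} {f g : boundedAtImInftySubalgebra ℂ} :
    Ideal.Quotient.mk (vanishingIdeal r) f = Ideal.Quotient.mk (vanishingIdeal r) g ↔
      ((f : ℍ → ℂ) - (g : ℍ → ℂ)) =O[atImInfty] nomePow r :=
  Ideal.Quotient.eq

lemma isBoundedAtImInfty_nomePow {r : ℝ} (hr : 0 ≤ r) : IsBoundedAtImInfty (nomePow r) :=
  (nomePow_isBigO hr).trans (isBigO_of_le _ fun τ => by simp [nomePow_zero])

lemma isBigO_jacobiTriple_zero_sub :
    (jacobiTriple 0 - (1 + 2 * nomePow 1 + 2 * nomePow 1 ^ 4)) =O[atImInfty] nomePow 5 := by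
  have hsum : ∑ k ∈ ({-2, -1, 0, 1, 2} : Finset ℤ), nomePow ((k : ℝ) ^ 2) =
      1 + 2 * nomePow 1 + 2 * nomePow 1 ^ 4 := by
    norm_num [nomePow_zero, ← nomePow_natCast_mul]
    ring
  rw [← hsum]
  refine isThetaFamily_intCast_sq.isBigO_sub_sum _ fun k hk => ?_
  have hk5 : 5 ≤ k ^ 2 := by
    simp only [Finset.mem_insert, Finset.mem_singleton, not_or] at hk
    rcases (by omega : 3 ≤ k ∨ k ≤ -3) with h | h <;> nlinarith
  exact_mod_cast hk5

lemma isBigO_jacobiTriple_one_sub :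
    (jacobiTriple 1 - (1 - 2 * nomePow 1 + 2 * nomePow 1 ^ 4)) =O[atImInfty] nomePow 5 := by
  convert isBigO_nomePow_comp_one_vadd isBigO_jacobiTriple_zero_sub using 2 with τ
  have hnome : nomePow 1 ((1 : ℝ) +ᵥ τ) = -nomePow 1 τ := by
    simp [nomePow_one_vadd]
  have htheta : jacobiTriple 0 ((1 : ℝ) +ᵥ τ) = jacobiTriple 1 τ := rfl
  simp [hnome, htheta]
  ring

lemma isBigO_jacobiTriple_two_sub :
    (jacobiTriple 2 - 2 * nomePow (1 / 4) * (1 + nomePow 1 ^ 2)) =O[atImInfty] nomePow 5 := by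
  have hsum : ∑ k ∈ ({-2, -1, 0, 1} : Finset ℤ), nomePow (((k : ℝ) + 1 / 2) ^ 2) =
      2 * nomePow (1 / 4) * (1 + nomePow 1 ^ 2) := by
    rw [← nomePow_natCast_mul, mul_add, mul_one, mul_assoc, ← nomePow_add]
    norm_num
    ring
  rw [← hsum]
  refine (isThetaFamily_intCast_add_sq (1 / 2)).isBigO_sub_sum _ fun k hk => ?_
  have hk6 : 6 ≤ k * (k + 1) := by
    simp only [Finset.mem_insert, Finset.mem_singleton, not_or] at hk
    rcases (by omega : 2 ≤ k ∨ k ≤ -3) with h | h <;> nlinarith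
  have hk6' : (6 : ℝ) ≤ k * (k + 1) := by exact_mod_cast hk6
  nlinarith

end Expansions

section TruncatedExpansions

lemma one_sixteenth_smul_mul_two_mul_pow_four {A : Type*} [CommRing A] [Algebra ℂ A] (b c w : A) :
    (1 / 16 : ℂ) • (b * (2 * w * c)) ^ 4 = w ^ 4 * c ^ 4 * b ^ 4 := by
  have hsixteen : (b * (2 * w * c)) ^ 4 = (16 : ℂ) • (w ^ 4 * c ^ 4 * b ^ 4) := by
    rw [Algebra.smul_def, map_ofNat]
    ring
  rw [hsixteen, smul_smul]
  norm_num

variable {R : Type*} [CommRing R] {q : R}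

lemma theta_three_expansion_pow_eight (hq : q ^ 5 = 0) :
    (1 + 2 * q + 2 * q ^ 4) ^ 8 =
      1 + 16 * q + 112 * q ^ 2 + 448 * q ^ 3 + 1136 * q ^ 4 := by
  have hpow2 : (1 + 2 * q + 2 * q ^ 4) ^ 2 = 1 + 4 * q + 4 * q ^ 2 + 4 * q ^ 4 := by grind
  have hpow4 : (1 + 4 * q + 4 * q ^ 2 + 4 * q ^ 4) ^ 2 =
      1 + 8 * q + 24 * q ^ 2 + 32 * q ^ 3 + 24 * q ^ 4 := by grind
  rw [show 8 = 2 * 2 * 2 from rfl, pow_mul, pow_mul, hpow2, hpow4]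
  grind

lemma theta_three_expansion_pow_sixteen (hq : q ^ 5 = 0) :
    (1 + 2 * q + 2 * q ^ 4) ^ 16 =
      1 + 32 * q + 480 * q ^ 2 + 4480 * q ^ 3 + 29152 * q ^ 4 := by
  rw [show 16 = 8 * 2 from rfl, pow_mul, theta_three_expansion_pow_eight hq]
  grind

lemma disc_expansion (hq : q ^ 5 = 0) :
    q * (1 + q ^ 2) ^ 4 * (1 - 2 * q + 2 * q ^ 4) ^ 4 =
      q - 8 * q ^ 2 + 28 * q ^ 3 - 64 * q ^ 4 := by
  grind

lemma disc_expansion_pow_two (hq : q ^ 5 = 0) :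
    (q - 8 * q ^ 2 + 28 * q ^ 3 - 64 * q ^ 4) ^ 2 = q ^ 2 - 16 * q ^ 3 + 120 * q ^ 4 := by
  grind

lemma disc_expansion_pow_three (hq : q ^ 5 = 0) :
    (q - 8 * q ^ 2 + 28 * q ^ 3 - 64 * q ^ 4) ^ 3 = q ^ 3 - 24 * q ^ 4 := by
  rw [pow_succ, disc_expansion_pow_two hq]
  grind

lemma extremal_polynomial_expansion {a d : R}
    (hq : q ^ 5 = 0) (ha : a = 1 + 2 * q + 2 * q ^ 4)
    (hd : d = q * (1 + q ^ 2) ^ 4 * (1 - 2 * q + 2 * q ^ 4) ^ 4) :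
    a ^ 41 - 82 * (a ^ 33 * d) + 1476 * (a ^ 25 * d ^ 2) - 3280 * (a ^ 17 * d ^ 3) =
      1 + 15170 * q ^ 4 := by
  have hfactor : a ^ 24 - 82 * (a ^ 16 * d) + 1476 * (a ^ 8 * d ^ 2) - 3280 * d ^ 3 =
      1 - 34 * q + 612 * q ^ 2 - 7752 * q ^ 3 + 92656 * q ^ 4 := by
    rw [show a ^ 24 = a ^ 16 * a ^ 8 by ring, hd, ha, disc_expansion hq,
      disc_expansion_pow_two hq, disc_expansion_pow_three hq, theta_three_expansion_pow_eight hq,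
      theta_three_expansion_pow_sixteen hq]
    clear ha hd
    grind
  have hpow17 : a ^ 17 = 1 + 34 * q + 544 * q ^ 2 + 5440 * q ^ 3 + 38114 * q ^ 4 := by
    rw [pow_succ, ha, theta_three_expansion_pow_sixteen hq]
    clear ha hd hfactor
    grind
  calc _ = a ^ 17 * (a ^ 24 - 82 * (a ^ 16 * d) + 1476 * (a ^ 8 * d ^ 2) - 3280 * d ^ 3) := by ring
    _ = 1 + 15170 * q ^ 4 := by
      rw [hpow17, hfactor]
      clear ha hd hfactor hpow17
      grind

end TruncatedExpansions

section ExtremalExpansions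

lemma isBoundedAtImInfty_jacobiTriple (i : Fin 3) : IsBoundedAtImInfty (jacobiTriple i) := by
  have hN := isThetaFamily_intCast_sq.isBoundedAtImInfty_thetaSeries
  fin_cases i
  · exact hN
  · exact hN.comp_tendsto tendsto_one_vadd_atImInfty
  · exact (isThetaFamily_intCast_add_sq (1 / 2)).isBoundedAtImInfty_thetaSeries

theorem isBigO_extremalTriple_zero_sub :
    (extremalTriple 0 - (1 + 15170 * nomePow 1 ^ 4)) =O[atImInfty] nomePow 5 := by
  let θ (i : Fin 3) : boundedAtImInftySubalgebra ℂ :=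
    ⟨jacobiTriple i, isBoundedAtImInfty_jacobiTriple i⟩
  let nome (r : ℝ) (hr : 0 ≤ r) : boundedAtImInftySubalgebra ℂ :=
    ⟨nomePow r, isBoundedAtImInfty_nomePow hr⟩
  let q := nome 1 (by norm_num)
  let w := nome (1 / 4) (by norm_num)
  let mk := Ideal.Quotient.mkₐ ℂ (vanishingIdeal 5)
  have hw : w ^ 4 = q := by
    ext : 1
    simp [w, q, nome, ← nomePow_natCast_mul]
  have hq : mk q ^ 5 = 0 := by
    have : mk (q ^ 5) = mk 0 := mk_eq_mk_iff_isBigO.mpr (by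
      simpa [q, nome, ← nomePow_natCast_mul] using isBigO_refl _ _)
    simpa using this
  have h0 : mk (θ 0) = mk (1 + 2 * q + 2 * q ^ 4) :=
    mk_eq_mk_iff_isBigO.mpr isBigO_jacobiTriple_zero_sub
  have h1 : mk (θ 1) = mk (1 - 2 * q + 2 * q ^ 4) :=
    mk_eq_mk_iff_isBigO.mpr isBigO_jacobiTriple_one_sub
  have h2 : mk (θ 2) = mk (2 * w * (1 + q ^ 2)) :=
    mk_eq_mk_iff_isBigO.mpr isBigO_jacobiTriple_two_sub
  let d := (1 / 16 : ℂ) • (θ 1 * θ 2) ^ 4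
  have hd : mk d = mk (q * (1 + q ^ 2) ^ 4 * (1 - 2 * q + 2 * q ^ 4) ^ 4) := by
    rw [map_smul, map_pow, map_mul, h1, h2, ← map_mul, ← map_pow, ← map_smul,
      one_sixteenth_smul_mul_two_mul_pow_four, hw]
  simp only [map_mul, map_pow, map_add, map_sub, map_one, map_ofNat] at h0 hd
  have hpoly := extremal_polynomial_expansion (q := mk q) (a := mk (θ 0)) (d := mk d) hq h0 hd
  have hextremal : mk (θ 0 ^ 41 - (82 : ℂ) • (θ 0 ^ 33 * d ^ 1) +
      (1476 : ℂ) • (θ 0 ^ 25 * d ^ 2) - (3280 : ℂ) • (θ 0 ^ 17 * d ^ 3)) =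
        mk (1 + 15170 * q ^ 4) := by
    simpa only [map_mul, map_pow, map_add, map_sub, map_one, map_ofNat, map_smul, pow_one,
      Algebra.smul_def] using hpoly
  exact mk_eq_mk_iff_isBigO.mp hextremal

lemma tendsto_nomePow {r : ℝ} (hr : 0 < r) : Tendsto (nomePow r) atImInfty (𝓝 0) := by
  have hlittle := nomePow_isLittleO hr
  rw [nomePow_zero] at hlittle
  exact (isLittleO_one_iff ℂ).mp hlittle

lemma tendsto_jacobiTriple_zero : Tendsto (jacobiTriple 0) atImInfty (𝓝 1) := by
  have hq := tendsto_nomePow one_pos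
  have hsub := isBigO_jacobiTriple_zero_sub.trans_tendsto (tendsto_nomePow (r := 5) (by norm_num))
  simpa using hsub.add (((hq.const_mul 2).const_add 1).add ((hq.pow 4).const_mul 2))

lemma tendsto_jacobiTriple_one : Tendsto (jacobiTriple 1) atImInfty (𝓝 1) :=
  tendsto_jacobiTriple_zero.comp tendsto_one_vadd_atImInfty

lemma isEquivalent_jacobiTriple_two :
    jacobiTriple 2 ~[atImInfty] fun τ => 2 * nomePow (1 / 4) τ := by
  have hsum : ∑ k ∈ ({-1, 0} : Finset ℤ), nomePow (((k : ℝ) + 1 / 2) ^ 2) =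
      fun τ => 2 * nomePow (1 / 4) τ := by
    ext τ
    norm_num
    ring
  have hO := (isThetaFamily_intCast_add_sq (1 / 2)).isBigO_sub_sum {-1, 0} (r := 9 / 4)
    fun k hk => ?_
  · rw [hsum] at hO
    exact (hO.trans_isLittleO (nomePow_isLittleO (by norm_num))).trans_isBigO
      (isBigO_self_const_mul two_ne_zero _ _)
  · have hk2 : 2 ≤ k * (k + 1) := by
      simp only [Finset.mem_insert, Finset.mem_singleton, not_or] at hk
      rcases (by omega : 1 ≤ k ∨ k ≤ -2) with h | h <;> nlinarith
    have hk2' : (2 : ℝ) ≤ k * (k + 1) := by exact_mod_cast hk2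
    nlinarith

theorem isEquivalent_extremalTriple_two :
    extremalTriple 2 ~[atImInfty] fun τ => 104960 * nomePow (17 / 4) τ := by
  have hθ₂ : Tendsto (jacobiTriple 2) atImInfty (𝓝 0) := by
    refine isEquivalent_jacobiTriple_two.symm.tendsto_nhds ?_
    simpa using (tendsto_nomePow (r := 1 / 4) (by norm_num)).const_mul 2
  have hθ₃θ₄ := tendsto_jacobiTriple_zero.mul tendsto_jacobiTriple_one
  let f (τ : ℍ) : ℂ := jacobiTriple 2 τ ^ 24 +
    82 / 16 * (jacobiTriple 2 τ ^ 16 * (jacobiTriple 0 τ * jacobiTriple 1 τ) ^ 4) +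
    1476 / 16 ^ 2 * (jacobiTriple 2 τ ^ 8 * (jacobiTriple 0 τ * jacobiTriple 1 τ) ^ 8) +
    3280 / 16 ^ 3 * (jacobiTriple 0 τ * jacobiTriple 1 τ) ^ 12
  have hfactor : extremalTriple 2 = jacobiTriple 2 ^ 17 * f := by
    ext τ
    simp [extremalTriple, discTriple, f]
    ring
  have hf : Tendsto f atImInfty (𝓝 (3280 / 16 ^ 3)) := by
    simpa using (((hθ₂.pow 24).add (((hθ₂.pow 16).mul (hθ₃θ₄.pow 4)).const_mul (82 / 16))).add
      (((hθ₂.pow 8).mul (hθ₃θ₄.pow 8)).const_mul (1476 / 16 ^ 2))).add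
      ((hθ₃θ₄.pow 12).const_mul (3280 / 16 ^ 3))
  have hequiv := (isEquivalent_jacobiTriple_two.pow 17).mul
    ((isEquivalent_const_iff_tendsto (by norm_num)).mpr hf)
  rw [hfactor]
  convert hequiv using 1
  ext τ
  have hpow : nomePow (17 / 4) τ = nomePow (1 / 4) τ ^ 17 := by
    rw [← Pi.pow_apply, ← nomePow_natCast_mul]
    norm_num
  simp [hpow]
  ring

end ExtremalExpansions

section PoissonSummation

open MeasureTheory Set UnitAddTorus

/-- Weierstrass' condition for the sum of the translates `x ↦ f (x + v k)`: on every compact set it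
is dominated by a convergent series of constants. -/
def TranslatesNormallySummable {κ G : Type*} [Add G] [TopologicalSpace G] (v : κ → G)
    (f : G → ℂ) : Prop :=
  ∀ K : Set G, IsCompact K → ∃ M : κ → ℝ, Summable M ∧ ∀ k, ∀ x ∈ K, ‖f (x + v k)‖ ≤ M k

namespace TranslatesNormallySummable

variable {κ G : Type*} [Add G] [TopologicalSpace G] {v : κ → G} {f : G → ℂ}

theorem summable (hf : TranslatesNormallySummable v f) (x : G) : Summable fun k => f (x + v k) := by
  obtain ⟨M, hM, hfM⟩ := hf {x} isCompact_singleton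
  exact .of_norm_bounded hM fun k => hfM k x rfl

theorem continuous_tsum [ContinuousAdd G] [WeaklyLocallyCompactSpace G]
    (hf : TranslatesNormallySummable v f) (hfc : Continuous f) :
    Continuous fun x => ∑' k, f (x + v k) := by
  refine continuous_iff_continuousAt.mpr fun x => ?_
  obtain ⟨K, hK, hKx⟩ := exists_compact_mem_nhds x
  obtain ⟨M, hM, hfM⟩ := hf K hK
  exact (continuousOn_tsum (fun k => by fun_prop) hM hfM).continuousAt hKx

end TranslatesNormallySummable

variable {ι : Type*}

/-- The integer vector `n`, as a vector of `ι → ℝ`. -/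
def intVec (n : ι → ℤ) : ι → ℝ := fun i => n i

/-- The projection of `ι → ℝ` onto the torus `(ℝ / ℤ) ^ ι`. -/
def torusMk : C(ι → ℝ, UnitAddTorus ι) := ⟨fun x i => x i, by fun_prop⟩

theorem torusMk_add_intVec (x : ι → ℝ) (n : ι → ℤ) : torusMk (x + intVec n) = torusMk x := by
  ext i
  simp [torusMk, intVec]

theorem exists_intVec_of_torusMk_eq {x y : ι → ℝ} (h : torusMk x = torusMk y) :
    ∃ n, y = x + intVec n := by
  have hcoord (i : ι) : ∃ k : ℤ, y i = x i + k := by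
    obtain ⟨k, hk⟩ := AddSubgroup.mem_zmultiples_iff.mp (QuotientAddGroup.eq.mp (congrFun h i))
    exact ⟨k, by rw [zsmul_one] at hk; rw [hk]; ring⟩
  choose n hn using hcoord
  exact ⟨n, funext hn⟩

theorem isQuotientMap_torusMk : IsQuotientMap (torusMk : C(ι → ℝ, UnitAddTorus ι)) :=
  (IsOpenQuotientMap.piMap fun _ => QuotientAddGroup.isOpenQuotientMap_mk).isQuotientMap

theorem factorsThrough_torusMk_tsum (f : (ι → ℝ) → ℂ) :
    Function.FactorsThrough (fun x => ∑' n, f (x + intVec n)) torusMk := by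
  intro x y hxy
  obtain ⟨m, rfl⟩ := exists_intVec_of_torusMk_eq hxy
  dsimp only
  rw [← (Equiv.addLeft m).tsum_eq fun n => f (x + intVec n)]
  refine tsum_congr fun n => congrArg f ?_
  ext i
  simp [intVec, add_assoc]

variable [Fintype ι]

theorem norm_mFourier_apply (n : ι → ℤ) (t : UnitAddTorus ι) : ‖mFourier n t‖ = 1 := by
  simp only [mFourier, ContinuousMap.coe_mk, norm_prod, fourier_apply, Circle.norm_coe,
    Finset.prod_const_one]

theorem mFourier_torusMk (n : ι → ℤ) (x : ι → ℝ) :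
    mFourier n (torusMk x) = cexp (2 * π * Complex.I * (∑ i, n i * x i : ℝ)) := by
  simp only [mFourier, torusMk, ContinuousMap.coe_mk, fourier_coe_apply, ← Complex.exp_sum]
  push_cast
  simp only [Finset.mul_sum, div_one, mul_assoc]

theorem integral_eq_tsum_setIntegral_unitCube {f : (ι → ℝ) → ℂ} (hf : Integrable f) :
    ∫ x, f x = ∑' n : ι → ℤ, ∫ x in univ.pi fun _ => Ioc (0 : ℝ) 1, f (x + intVec n) := by
  have hcube : (univ.pi fun _ : ι => Ioc (0 : ℝ) 1) =ᵐ[volume]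
      ZSpan.fundamentalDomain (Pi.basisFun ℝ ι) := by
    rw [ZSpan.fundamentalDomain_pi_basisFun]
    exact Measure.univ_pi_Ioc_ae_eq_Icc.trans Measure.univ_pi_Ico_ae_eq_Icc.symm
  let e : (ι → ℤ) ≃ (Submodule.span ℤ (range (Pi.basisFun ℝ ι))).toAddSubgroup :=
    ((Pi.basisFun ℝ ι).restrictScalars ℤ).equivFun.symm.toEquiv
  have he (n : ι → ℤ) : (e n : ι → ℝ) = intVec n := by
    change (((Pi.basisFun ℝ ι).restrictScalars ℤ).equivFun.symm n : ι → ℝ) = _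
    classical
    ext i
    simp [intVec, Module.Basis.equivFun_symm_apply, Pi.single_apply]
  have := e.symm.injective.countable
  rw [(ZSpan.isAddFundamentalDomain' (Pi.basisFun ℝ ι) volume).integral_eq_tsum'' f hf,
    ← e.tsum_eq]
  refine tsum_congr fun n => (setIntegral_congr_set hcube).symm.trans (integral_congr_ae ?_)
  exact .of_forall fun x => congrArg f (by
    rw [AddSubgroup.vadd_def, he, vadd_eq_add, add_comm])

variable {f : (ι → ℝ) → ℂ}

/-- The function on the torus whose pullback to `ι → ℝ` is the sum of the translates of `f`. -/
def torusPeriodization (hf : TranslatesNormallySummable intVec f) (hfc : Continuous f) :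
    C(UnitAddTorus ι, ℂ) :=
  isQuotientMap_torusMk.lift ⟨fun x => ∑' n, f (x + intVec n), hf.continuous_tsum hfc⟩
    (factorsThrough_torusMk_tsum f)

theorem torusPeriodization_torusMk (hf : TranslatesNormallySummable intVec f) (hfc : Continuous f)
    (x : ι → ℝ) : torusPeriodization hf hfc (torusMk x) = ∑' n, f (x + intVec n) :=
  DFunLike.congr_fun (isQuotientMap_torusMk.lift_comp
    ⟨_, hf.continuous_tsum hfc⟩ (factorsThrough_torusMk_tsum f)) x

theorem mFourierCoeff_torusPeriodization (hf : TranslatesNormallySummable intVec f)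
    (hfc : Continuous f) (hfi : Integrable f) (n : ι → ℤ) :
    mFourierCoeff (torusPeriodization hf hfc) n = ∫ x, mFourier (-n) (torusMk x) * f x := by
  set e : C(ι → ℝ, ℂ) := (mFourier (-n)).comp torusMk
  have e_add (x : ι → ℝ) (m : ι → ℤ) : e (x + intVec m) = e x :=
    congrArg (mFourier (-n)) (torusMk_add_intVec x m)
  have norm_e (x : ι → ℝ) : ‖e x‖ = 1 := norm_mFourier_apply _ _
  set cube : Set (ι → ℝ) := univ.pi fun _ => Ioc 0 1 with hcube
  have hcubeK : cube ⊆ Icc 0 1 :=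
    fun x hx => ⟨fun i => (hx i trivial).1.le, fun i => (hx i trivial).2⟩
  have hcubeM : MeasurableSet cube := .univ_pi fun _ => measurableSet_Ioc
  have : IsFiniteMeasure (volume.restrict cube) :=
    ⟨by simpa using (measure_mono hcubeK).trans_lt isCompact_Icc.measure_lt_top⟩
  obtain ⟨M, hM, hfM⟩ := hf (Icc 0 1) isCompact_Icc
  calc mFourierCoeff (torusPeriodization hf hfc) n
    _ = ∫ x in cube, e x * ∑' m, f (x + intVec m) := by
        rw [mFourierCoeff_eq_integral _ n 0, show {x : ι → ℝ | _} = cube by ext; simp [hcube]]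
        exact integral_congr_ae (.of_forall fun x =>
          congrArg (e x * ·) (torusPeriodization_torusMk hf hfc x))
    _ = ∑' m, ∫ x in cube, e x * f (x + intVec m) := by
        refine (hasSum_integral_of_dominated_convergence (fun m _ => M m)
          (fun m => by fun_prop) (fun m => ?_) (.of_forall fun _ => hM) (integrable_const _)
          (.of_forall fun x => (hf.summable x).hasSum.mul_left (e x))).tsum_eq.symm
        filter_upwards [ae_restrict_mem hcubeM] with x hx
        rw [norm_mul, norm_e, one_mul]
        exact hfM m x (hcubeK hx)
    _ = ∑' m, ∫ x in cube, e (x + intVec m) * f (x + intVec m) := by simp only [e_add]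
    _ = ∫ x, e x * f x := by
        refine (integral_eq_tsum_setIntegral_unitCube (hfi.bdd_mul (c := 1) ?_ ?_)).symm
        · fun_prop
        · exact .of_forall fun x => (norm_e x).le

theorem tsum_add_intVec_eq_tsum_mFourier (hf : TranslatesNormallySummable intVec f)
    (hfc : Continuous f) (hfi : Integrable f)
    (hs : Summable fun n : ι → ℤ => ∫ y, mFourier (-n) (torusMk y) * f y) (x : ι → ℝ) :
    ∑' n, f (x + intVec n) =
      ∑' n, (∫ y, mFourier (-n) (torusMk y) * f y) * mFourier n (torusMk x) := by
  simp only [← mFourierCoeff_torusPeriodization hf hfc hfi] at hs ⊢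
  rw [← torusPeriodization_torusMk hf hfc]
  exact (hasSum_mFourier_series_apply_of_summable hs _).tsum_eq.symm

end PoissonSummation

section LatticePoisson

open MeasureTheory Module UnitAddTorus
open scoped FourierTransform

variable {E : Type*} [NormedAddCommGroup E] [InnerProductSpace ℝ E]

/-- The dual of a lattice with respect to the inner product. -/
def dualLattice (Λ : Submodule ℤ E) : Submodule ℤ E :=
  LinearMap.BilinForm.dualSubmodule (innerₗ E) Λ

theorem mem_dualLattice {Λ : Submodule ℤ E} {x : E} :
    x ∈ dualLattice Λ ↔ ∀ y ∈ Λ, ∃ k : ℤ, ⟪x, y⟫ = k := by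
  simp only [dualLattice, LinearMap.BilinForm.mem_dualSubmodule, Submodule.mem_one,
    innerₗ_apply_apply, eq_comm, eq_intCast]

variable [FiniteDimensional ℝ E] {Λ : Submodule ℤ E} [DiscreteTopology Λ] [IsZLattice ℝ Λ]
  {κ : Type*}

theorem exists_dualBasis [Finite κ] [DecidableEq κ] (b : Basis κ ℤ Λ) :
    ∃ B : Basis κ ℝ E, dualLattice Λ = Submodule.span ℤ (Set.range B) ∧
      ∀ i j, ⟪B i, (b j : E)⟫ = if j = i then 1 else 0 := by
  have hnd : LinearMap.BilinForm.Nondegenerate (innerₗ E) := by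
    constructor <;> intro x hx <;> exact inner_self_eq_zero.mp (hx x)
  refine ⟨LinearMap.BilinForm.dualBasis (innerₗ E) hnd (b.ofZLatticeBasis ℝ Λ), ?_, fun i j => ?_⟩
  · rw [← LinearMap.BilinForm.dualSubmodule_span_of_basis, b.ofZLatticeBasis_span ℝ, dualLattice]
  · simpa using LinearMap.BilinForm.apply_dualBasis_left hnd (b.ofZLatticeBasis ℝ Λ) i j

instance discreteTopology_dualLattice : DiscreteTopology (dualLattice Λ) := by
  classical
  have := ZLattice.module_free ℝ Λ
  have := ZLattice.module_finite ℝ Λ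
  obtain ⟨B, hspan, -⟩ := exists_dualBasis (Free.chooseBasis ℤ Λ)
  rw [hspan]
  infer_instance

variable [Fintype κ]

/-- The linear coordinates of `E` given by a basis of the lattice `Λ`, as a map from coordinates to
vectors; it maps `κ → ℤ` onto `Λ`. -/
def ofLatticeCoord (b : Basis κ ℤ Λ) : (κ → ℝ) ≃L[ℝ] E :=
  (b.ofZLatticeBasis ℝ Λ).equivFunL.symm

theorem ofLatticeCoord_apply (b : Basis κ ℤ Λ) (x : κ → ℝ) :
    ofLatticeCoord b x = ∑ i, x i • (b i : E) := by
  exact ((b.ofZLatticeBasis ℝ Λ).equivFun_symm_apply x).trans (by simp)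

theorem ofLatticeCoord_intVec (b : Basis κ ℤ Λ) (n : κ → ℤ) :
    ofLatticeCoord b (intVec n) = b.equivFun.symm n := by
  simp only [ofLatticeCoord_apply, intVec, Basis.equivFun_symm_apply, Int.cast_smul_eq_zsmul,
    AddSubmonoidClass.coe_finsetSum, Submodule.coe_smul]

theorem exists_equiv_dualLattice (b : Basis κ ℤ Λ) :
    ∃ e : (κ → ℤ) ≃ dualLattice Λ, ∀ n x, ⟪(e n : E), ofLatticeCoord b x⟫ = ∑ i, n i * x i := by
  classical
  obtain ⟨B, hspan, hpair⟩ := exists_dualBasis b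
  let e : (κ → ℤ) ≃ dualLattice Λ :=
    (B.restrictScalars ℤ).equivFun.symm.toEquiv.trans (LinearEquiv.ofEq _ _ hspan.symm).toEquiv
  refine ⟨e, fun n x => ?_⟩
  have he : (e n : E) = ∑ i, (n i : ℝ) • B i := by
    simp [e, Basis.equivFun_symm_apply, Int.cast_smul_eq_zsmul]
  simp [he, ofLatticeCoord_apply, sum_inner, inner_sum, real_inner_smul_left, real_inner_smul_right,
    hpair, mul_comm]

theorem TranslatesNormallySummable.comp_ofLatticeCoord
    {f : E → ℂ} (hf : TranslatesNormallySummable ((↑) : Λ → E) f) (b : Basis κ ℤ Λ) :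
    TranslatesNormallySummable intVec fun x => f (ofLatticeCoord b x) := by
  intro K hK
  obtain ⟨M, hM, hfM⟩ := hf _ (hK.image (ofLatticeCoord b).continuous)
  refine ⟨_, b.equivFun.symm.toEquiv.summable_iff.mpr hM, fun n x hx => ?_⟩
  dsimp only
  rw [map_add, ofLatticeCoord_intVec]
  exact hfM _ _ ⟨x, hx, rfl⟩

variable [MeasurableSpace E] [BorelSpace E]

theorem measurableEmbedding_ofLatticeCoord (b : Basis κ ℤ Λ) :
    MeasurableEmbedding (ofLatticeCoord b) :=
  (ofLatticeCoord b).toHomeomorph.measurableEmbedding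

theorem map_ofLatticeCoord_volume (b : Basis κ ℤ Λ) :
    Measure.map (ofLatticeCoord b) volume = (ENNReal.ofReal (ZLattice.covolume Λ))⁻¹ • volume := by
  ext s hs
  rw [Measure.map_apply (ofLatticeCoord b).continuous.measurable hs, Measure.smul_apply,
    smul_eq_mul, ← ENNReal.div_eq_inv_mul,
    ← ZLattice.volume_image_eq_volume_div_covolume' Λ b hs.nullMeasurableSet]
  congr 1
  exact ((b.ofZLatticeBasis ℝ Λ).equivFun.toEquiv.image_eq_preimage_symm s).symm

theorem integrable_comp_ofLatticeCoord (b : Basis κ ℤ Λ) {f : E → ℂ} (hf : Integrable f) :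
    Integrable fun x => f (ofLatticeCoord b x) := by
  have hmap := map_ofLatticeCoord_volume b
  have := hf.smul_measure (c := (ENNReal.ofReal (ZLattice.covolume Λ))⁻¹)
    (by simpa using ZLattice.covolume_pos Λ)
  rw [← hmap] at this
  exact (measurableEmbedding_ofLatticeCoord b).integrable_map_iff.mp this

theorem integral_comp_ofLatticeCoord (b : Basis κ ℤ Λ) (f : E → ℂ) :
    ∫ x, f (ofLatticeCoord b x) = (ZLattice.covolume Λ : ℂ)⁻¹ * ∫ v, f v := by
  have hpos := ZLattice.covolume_pos Λ (volume : Measure E)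
  rw [← (measurableEmbedding_ofLatticeCoord b).integral_map, map_ofLatticeCoord_volume,
    integral_smul_measure, ENNReal.toReal_inv, ENNReal.toReal_ofReal hpos.le, Complex.real_smul,
    Complex.ofReal_inv]

theorem integral_mFourier_mul_comp_ofLatticeCoord (b : Basis κ ℤ Λ) (f : E → ℂ) {n : κ → ℤ} {y : E}
    (hy : ∀ x, ⟪y, ofLatticeCoord b x⟫ = ∑ i, n i * x i) :
    ∫ x, mFourier (-n) (torusMk x) * f (ofLatticeCoord b x) =
      (ZLattice.covolume Λ : ℂ)⁻¹ * 𝓕 f y := by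
  rw [Real.fourier_eq', ← integral_comp_ofLatticeCoord b]
  refine integral_congr_ae (.of_forall fun x => ?_)
  simp only [mFourier_torusMk, real_inner_comm, hy, smul_eq_mul, Pi.neg_apply]
  congr 2
  push_cast
  simp only [neg_mul, Finset.sum_neg_distrib]
  ring

theorem tsum_add_eq_tsum_fourier {f : E → ℂ} (hf : TranslatesNormallySummable ((↑) : Λ → E) f)
    (hfc : Continuous f) (hfi : Integrable f) (hs : Summable fun y : dualLattice Λ => 𝓕 f y)
    (u : E) :
    ∑' x : Λ, f (u + x) = (ZLattice.covolume Λ : ℂ)⁻¹ *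
      ∑' y : dualLattice Λ, 𝓕 f y * cexp (2 * π * Complex.I * ⟪(y : E), u⟫) := by
  have := ZLattice.module_free ℝ Λ
  have := ZLattice.module_finite ℝ Λ
  let b := Free.chooseBasis ℤ Λ
  obtain ⟨e, he⟩ := exists_equiv_dualLattice b
  have hcoeff (n) := integral_mFourier_mul_comp_ofLatticeCoord b f (he n)
  have hpoisson := tsum_add_intVec_eq_tsum_mFourier (hf.comp_ofLatticeCoord b)
    (by fun_prop) (integrable_comp_ofLatticeCoord b hfi)
    (by simp only [hcoeff]; exact (e.summable_iff.mpr hs).mul_left _) ((ofLatticeCoord b).symm u)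
  simp only [hcoeff] at hpoisson
  simp only [map_add, ofLatticeCoord_intVec, mFourier_torusMk, ← he,
    ContinuousLinearEquiv.apply_symm_apply] at hpoisson
  rw [← b.equivFun.symm.toEquiv.tsum_eq, ← e.tsum_eq, ← tsum_mul_left]
  simpa only [mul_assoc] using! hpoisson

end LatticePoisson

section LatticeTheta

open MeasureTheory Module
open scoped FourierTransform Nat

variable {E : Type*} [NormedAddCommGroup E]

lemma norm_sq_le_two_mul_add (v x : E) : ‖x‖ ^ 2 ≤ 2 * (‖v + x‖ ^ 2 + ‖v‖ ^ 2) := by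
  have h : ‖x‖ ≤ ‖v + x‖ + ‖v‖ := by simpa using norm_sub_le (v + x) v
  nlinarith [norm_nonneg x, sq_nonneg (‖v + x‖ - ‖v‖)]

lemma exp_neg_mul_norm_add_sq_le {t : ℝ} (ht : 0 < t) (v x : E) :
    Real.exp (-π * t * ‖v + x‖ ^ 2) ≤
      Real.exp (π * t * ‖v‖ ^ 2) * Real.exp (-(π * t / 2 * ‖x‖ ^ 2)) := by
  rw [← Real.exp_add, Real.exp_le_exp]
  nlinarith [mul_le_mul_of_nonneg_left (norm_sq_le_two_mul_add v x) (mul_pos Real.pi_pos ht).le]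

variable [InnerProductSpace ℝ E] [FiniteDimensional ℝ E] {Λ : Submodule ℤ E} [DiscreteTopology Λ]

lemma summable_exp_neg_mul_norm_sq {s : ℝ} (hs : 0 < s) :
    Summable fun x : Λ => Real.exp (-(s * ‖x‖ ^ 2)) := by
  set k := finrank ℤ Λ + 1
  refine ((ZLattice.summable_norm_pow_inv Λ (2 * k) (by omega)).mul_left
    (k ! / s ^ k)).of_norm_bounded_eventually ((Set.finite_singleton 0).subset fun x hx => ?_)
  by_contra! hx0
  have hpos : 0 < s * ‖x‖ ^ 2 := by have := norm_pos_iff.mpr hx0; positivity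
  refine hx (show ‖Real.exp _‖ ≤ _ from ?_)
  rw [Real.norm_of_nonneg (Real.exp_nonneg _), Real.exp_neg, inv_pow, ← div_eq_mul_inv,
    div_div, pow_mul, ← mul_pow, ← inv_div]
  exact inv_anti₀ (by positivity) (Real.pow_div_factorial_le_exp _ hpos.le k)

lemma isThetaFamily_norm_add_sq (u : E) : IsThetaFamily fun x : Λ => ‖u + x‖ ^ 2 where
  nonneg _ := by positivity
  summable t ht := .of_nonneg_of_le (fun _ => Real.exp_nonneg _)
    (fun x => exp_neg_mul_norm_add_sq_le ht u x)
    ((summable_exp_neg_mul_norm_sq (by positivity)).mul_left _)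

lemma translatesNormallySummable_nomePow (τ : ℍ) :
    TranslatesNormallySummable ((↑) : Λ → E) fun v => nomePow (‖v‖ ^ 2) τ := by
  intro K hK
  obtain ⟨R, hR⟩ := hK.isBounded.exists_norm_le
  have hτ := τ.im_pos
  refine ⟨_, (summable_exp_neg_mul_norm_sq (s := π * τ.im / 2) (by positivity)).mul_left
    (Real.exp (π * τ.im * R ^ 2)), fun x v hv => ?_⟩
  rw [norm_nomePow]
  refine (exp_neg_mul_norm_add_sq_le hτ v x).trans ?_
  have := hR v hv
  simp only [Submodule.norm_coe]
  gcongr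

variable [MeasurableSpace E] [BorelSpace E]

lemma integrable_nomePow_norm_sq (τ : ℍ) : Integrable fun v : E => nomePow (‖v‖ ^ 2) τ := by
  have hb : 0 < (-(π * Complex.I * τ)).re := by simpa using mul_pos Real.pi_pos τ.im_pos
  simpa [nomePow] using GaussianFourier.integrable_cexp_neg_mul_sq_norm_add hb 0 (0 : E)

lemma fourier_nomePow_norm_sq (τ : ℍ) (w : E) :
    𝓕 (fun v : E => nomePow (‖v‖ ^ 2) (ModularGroup.S • τ)) w =
      thetaFactor τ ^ finrank ℝ E * nomePow (‖w‖ ^ 2) τ := by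
  have hb : 0 < (-(π * Complex.I * (ModularGroup.S • τ : ℍ))).re := by
    simpa using mul_pos Real.pi_pos (ModularGroup.S • τ).im_pos
  have hτ := τ.ne_zero
  have hgauss := fourier_gaussian_innerProductSpace hb w
  simp only [neg_neg, coe_S_smul] at hgauss
  simp only [nomePow, coe_S_smul]
  push_cast
  rw [hgauss, thetaFactor, ← Complex.cpow_nat_mul]
  have hI : (π : ℂ) / -(π * Complex.I * (-1 / τ)) = -Complex.I * τ := by
    have hπ : (π : ℂ) ≠ 0 := by simp
    field_simp
    simp
  have hexp : -(π : ℂ) ^ 2 * ‖w‖ ^ 2 / -(π * Complex.I * (-1 / τ)) =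
      π * Complex.I * τ * ‖w‖ ^ 2 := by
    rw [neg_mul, sq (π : ℂ), mul_assoc, neg_div, mul_div_right_comm, hI]
    ring
  rw [hI, hexp, mul_one_div]

theorem thetaSeries_norm_add_sq_S_smul [IsZLattice ℝ Λ] (u : E) (τ : ℍ) :
    thetaSeries (fun x : Λ => ‖u + x‖ ^ 2) (ModularGroup.S • τ) =
      (ZLattice.covolume Λ : ℂ)⁻¹ * (thetaFactor τ ^ finrank ℝ E *
        ∑' y : dualLattice Λ,
          nomePow (‖(y : E)‖ ^ 2) τ * cexp (2 * π * Complex.I * ⟪(y : E), u⟫)) := by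
  have hdual : Summable fun y : dualLattice Λ => nomePow (‖(y : E)‖ ^ 2) τ := by
    simpa using (isThetaFamily_norm_add_sq (Λ := dualLattice Λ) (0 : E)).summable_nomePow τ
  have hpoisson := tsum_add_eq_tsum_fourier
    (translatesNormallySummable_nomePow (Λ := Λ) (ModularGroup.S • τ))
    (by unfold nomePow; fun_prop) (integrable_nomePow_norm_sq _)
    (by simpa only [fourier_nomePow_norm_sq] using hdual.mul_left _) u
  simp only [fourier_nomePow_norm_sq, mul_assoc, tsum_mul_left] at hpoisson
  simpa only [thetaSeries, mul_assoc] using hpoisson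

end LatticeTheta

section SelfDual

open Module

variable {E : Type*} [NormedAddCommGroup E] [InnerProductSpace ℝ E] {Λ : Submodule ℤ E}

lemma exists_inner_eq_intCast (hΛ : dualLattice Λ = Λ) {x y : E} (hx : x ∈ Λ) (hy : y ∈ Λ) :
    ∃ k : ℤ, ⟪x, y⟫ = k :=
  mem_dualLattice.mp (hΛ.symm ▸ hx) y hy

lemma exists_norm_sq_eq_intCast (hΛ : dualLattice Λ = Λ) {x : E} (hx : x ∈ Λ) :
    ∃ k : ℤ, ‖x‖ ^ 2 = k := by
  simpa only [real_inner_self_eq_norm_sq] using exists_inner_eq_intCast hΛ hx hx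

lemma discreteTopology_of_dualLattice_eq (hΛ : dualLattice Λ = Λ) : DiscreteTopology Λ := by
  refine discreteTopology_of_isOpen_singleton_zero (Metric.isOpen_singleton_iff.mpr
    ⟨1, one_pos, fun x hx => ?_⟩)
  obtain ⟨k, hk⟩ := exists_norm_sq_eq_intCast hΛ x.2
  have hx1 : ‖(x : E)‖ < 1 := by simpa using hx
  have hk1 : k < 1 := by
    exact_mod_cast hk ▸ pow_lt_one₀ (norm_nonneg _) hx1 two_ne_zero
  have hk0 : (k : ℝ) ≤ 0 := by exact_mod_cast Int.lt_add_one_iff.mp hk1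
  simpa using (hk.trans_le hk0).antisymm (sq_nonneg _)

lemma span_eq_top_of_dualLattice_eq [FiniteDimensional ℝ E] (hΛ : dualLattice Λ = Λ) :
    Submodule.span ℝ (Λ : Set E) = ⊤ := by
  rw [← Submodule.orthogonal_eq_bot_iff, Submodule.eq_bot_iff]
  intro v hv
  have horth (y) (hy : y ∈ Λ) : ⟪v, y⟫ = 0 :=
    Submodule.inner_left_of_mem_orthogonal (Submodule.subset_span hy) hv
  have hvΛ : v ∈ Λ := hΛ ▸ mem_dualLattice.mpr fun y hy => ⟨0, by simpa using horth y hy⟩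
  exact inner_self_eq_zero.mp (horth v hvΛ)

/-- `u` is half a characteristic vector of `Λ`: `2⟪u, x⟫ ≡ ‖x‖² mod 2` for all `x ∈ Λ`. For an odd
unimodular lattice `Λ`, the shadow is the coset `u + Λ`. -/
def IsHalfCharacteristic (Λ : Submodule ℤ E) (u : E) : Prop :=
  ∀ x ∈ Λ, ∃ m : ℤ, 2 * ⟪u, x⟫ = ‖x‖ ^ 2 + 2 * m

variable {u : E}

lemma IsHalfCharacteristic.two_smul_mem (hu : IsHalfCharacteristic Λ u) (hΛ : dualLattice Λ = Λ) :
    (2 : ℤ) • u ∈ Λ := by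
  refine hΛ ▸ mem_dualLattice.mpr fun y hy => ?_
  obtain ⟨m, hm⟩ := hu y hy
  obtain ⟨k, hk⟩ := exists_norm_sq_eq_intCast hΛ hy
  refine ⟨k + 2 * m, ?_⟩
  rw [← Int.cast_smul_eq_zsmul ℝ, real_inner_smul_left]
  push_cast
  rw [← hk, ← hm]

lemma IsHalfCharacteristic.exists_norm_add_sq_eq (hu : IsHalfCharacteristic Λ u)
    (hΛ : dualLattice Λ = Λ) {x : E} (hx : x ∈ Λ) :
    ∃ k : ℤ, ‖u + x‖ ^ 2 = ‖u‖ ^ 2 + 2 * k := by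
  obtain ⟨m, hm⟩ := hu x hx
  obtain ⟨k, hk⟩ := exists_norm_sq_eq_intCast hΛ hx
  refine ⟨k + m, ?_⟩
  rw [norm_add_sq_real, hm, hk]
  push_cast
  ring

lemma isHalfCharacteristic_of_basis {κ : Type*} (hΛ : dualLattice Λ = Λ) (b : Basis κ ℤ Λ)
    (hu : ∀ i, 2 * ⟪u, (b i : E)⟫ = ‖(b i : E)‖ ^ 2) : IsHalfCharacteristic Λ u := by
  intro x hx
  lift x to Λ using hx
  have hx : x ∈ Submodule.span ℤ (Set.range b) := b.span_eq ▸ Submodule.mem_top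
  induction hx using Submodule.span_induction with
  | mem x hx =>
    obtain ⟨i, rfl⟩ := hx
    exact ⟨0, by simp [hu]⟩
  | zero => exact ⟨0, by simp⟩
  | add x y _ _ hx hy =>
    obtain ⟨⟨m, hm⟩, l, hl⟩ := And.intro hx hy
    obtain ⟨k, hk⟩ := exists_inner_eq_intCast hΛ x.2 y.2
    refine ⟨m + l - k, ?_⟩
    rw [Submodule.coe_add, inner_add_right, mul_add, hm, hl, norm_add_sq_real, hk]
    push_cast
    ring
  | smul a x _ hx =>
    obtain ⟨⟨m, hm⟩, c, hc⟩ := And.intro hx (Int.even_mul_pred_self a)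
    obtain ⟨k, hk⟩ := exists_norm_sq_eq_intCast hΛ x.2
    have hc' : (a : ℝ) * (a - 1) = c + c := by exact_mod_cast hc
    refine ⟨a * m - c * k, ?_⟩
    rw [Submodule.coe_smul, ← Int.cast_smul_eq_zsmul ℝ, real_inner_smul_right, norm_smul, mul_pow,
      Real.norm_eq_abs, sq_abs, hk]
    rw [hk] at hm
    push_cast
    linear_combination (a : ℝ) * hm - (k : ℝ) * hc'

variable [FiniteDimensional ℝ E] [DiscreteTopology Λ] [IsZLattice ℝ Λ]

theorem exists_isHalfCharacteristic (hΛ : dualLattice Λ = Λ) : ∃ u, IsHalfCharacteristic Λ u := by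
  classical
  have := ZLattice.module_free ℝ Λ
  have := ZLattice.module_finite ℝ Λ
  obtain ⟨B, -, hpair⟩ := exists_dualBasis (Free.chooseBasis ℤ Λ)
  refine ⟨∑ i, (‖(Free.chooseBasis ℤ Λ i : E)‖ ^ 2 / 2) • B i,
    isHalfCharacteristic_of_basis hΛ (Free.chooseBasis ℤ Λ) fun i => ?_⟩
  simp [sum_inner, real_inner_smul_left, hpair, mul_div_cancel₀]

end SelfDual

section LatticeTriple

open Module

variable {E : Type*} [NormedAddCommGroup E] [InnerProductSpace ℝ E] [FiniteDimensional ℝ E]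
  {Λ : Submodule ℤ E} [DiscreteTopology Λ]

lemma isThetaFamily_norm_sq : IsThetaFamily fun x : Λ => ‖x‖ ^ 2 := by
  simpa using isThetaFamily_norm_add_sq (Λ := Λ) (0 : E)

variable [IsZLattice ℝ Λ]

lemma S_smul_I : ModularGroup.S • UpperHalfPlane.I = UpperHalfPlane.I := by
  ext
  rw [coe_S_smul, UpperHalfPlane.coe_I]
  simp

lemma thetaFactor_I : thetaFactor UpperHalfPlane.I = 1 := by
  simp [thetaFactor]

theorem covolume_eq_one_of_dualLattice_eq [MeasurableSpace E] [BorelSpace E]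
    (hΛ : dualLattice Λ = Λ) : ZLattice.covolume Λ = 1 := by
  have hθ := thetaSeries_norm_add_sq_S_smul (Λ := Λ) 0 UpperHalfPlane.I
  rw [hΛ] at hθ
  simp only [S_smul_I, thetaFactor_I, zero_add, one_pow, one_mul, inner_zero_right,
    Complex.ofReal_zero, mul_zero, Complex.exp_zero, mul_one] at hθ
  have hne := thetaSeries_I_ne_zero (isThetaFamily_norm_sq (Λ := Λ))
  have hinv := mul_right_cancel₀ hne (hθ.symm.trans (one_mul _).symm)
  exact_mod_cast inv_eq_one.mp hinv

/-- The theta triple of `Λ`, consisting of its theta series, the theta series twisted by the signs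
`(-1) ^ ‖x‖²`, and the theta series of `u + Λ`. -/
def latticeTriple (Λ : Submodule ℤ E) (u : E) : Fin 3 → ℍ → ℂ :=
  thetaTriple (fun x : Λ => ‖x‖ ^ 2) (fun x : Λ => ‖u + x‖ ^ 2)

variable {u : E}

lemma thetaSeries_halfCharacteristic_S_smul (hΛ : dualLattice Λ = Λ)
    (hu : IsHalfCharacteristic Λ u) (τ : ℍ) :
    thetaSeries (fun x : Λ => ‖u + x‖ ^ 2) (ModularGroup.S • τ) =
      thetaFactor τ ^ finrank ℝ E * thetaSeries (fun x : Λ => ‖x‖ ^ 2) ((1 : ℝ) +ᵥ τ) := by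
  borelize E
  rw [thetaSeries_norm_add_sq_S_smul, covolume_eq_one_of_dualLattice_eq hΛ, hΛ, Complex.ofReal_one,
    inv_one, one_mul, thetaSeries]
  congr 1
  refine tsum_congr fun x => ?_
  obtain ⟨m, hm⟩ := hu x x.2
  have hm' : (2 : ℂ) * ⟪(x : E), u⟫ = (‖(x : E)‖ ^ 2 : ℝ) + 2 * m := by
    rw [real_inner_comm]
    exact_mod_cast hm
  have hexp : cexp (2 * π * Complex.I * ⟪(x : E), u⟫) =
      cexp (π * Complex.I * (‖(x : E)‖ ^ 2 : ℝ)) :=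
    Complex.exp_eq_exp_iff_exists_int.mpr ⟨m, by linear_combination π * Complex.I * hm'⟩
  rw [nomePow_one_vadd, hexp, mul_comm]
  rfl

theorem isThetaTriple_latticeTriple (hΛ : dualLattice Λ = Λ) (hu : IsHalfCharacteristic Λ u) :
    IsThetaTriple (finrank ℝ E) (cexp (π * Complex.I * (‖u‖ ^ 2 : ℝ))) (latticeTriple Λ u) := by
  borelize E
  refine isThetaTriple_thetaTriple isThetaFamily_norm_sq (isThetaFamily_norm_add_sq u)
    (fun x => exists_norm_sq_eq_intCast hΛ x.2) (fun x => hu.exists_norm_add_sq_eq hΛ x.2)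
    (fun τ => ?_) (thetaSeries_halfCharacteristic_S_smul hΛ hu)
  have hθ := thetaSeries_norm_add_sq_S_smul (Λ := Λ) 0 τ
  rw [hΛ, covolume_eq_one_of_dualLattice_eq hΛ] at hθ
  simpa [thetaSeries] using hθ

lemma cexp_norm_sq_eq_jacobiMultiplier_pow (hΛ : dualLattice Λ = Λ)
    (hu : IsHalfCharacteristic Λ u) :
    cexp (π * Complex.I * (‖u‖ ^ 2 : ℝ)) = jacobiMultiplier ^ finrank ℝ E :=
  (isThetaTriple_latticeTriple hΛ hu).multiplier_eq isThetaTriple_jacobiTriple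
    (thetaSeries_I_ne_zero isThetaFamily_norm_sq) (thetaSeries_I_ne_zero isThetaFamily_intCast_sq)

/-- Van der Blij's lemma on the norms of characteristic vectors. -/
theorem IsHalfCharacteristic.exists_norm_sq_eq (hu : IsHalfCharacteristic Λ u)
    (hΛ : dualLattice Λ = Λ) : ∃ k : ℤ, ‖u‖ ^ 2 = finrank ℝ E / 4 + 2 * k := by
  have hexp := cexp_norm_sq_eq_jacobiMultiplier_pow hΛ hu
  rw [jacobiMultiplier, ← Complex.exp_nat_mul, Complex.exp_eq_exp_iff_exists_int] at hexp
  obtain ⟨k, hk⟩ := hexp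
  refine ⟨k, ?_⟩
  have hπ : (π : ℂ) * Complex.I ≠ 0 := by simp
  apply Complex.ofReal_injective
  apply mul_left_cancel₀ hπ
  rw [hk]
  push_cast
  ring

end LatticeTriple

section ExtremalLattices

open Module

variable {E : Type*} [NormedAddCommGroup E] {Λ : Submodule ℤ E}

/-- The difference of the numbers of vectors of norm `4` in `Λ` and in an extremal lattice. -/
def kissingDefect (Λ : Submodule ℤ E) : ℂ := ({x : Λ | ‖x‖ ^ 2 = 4}.ncard : ℂ) - 15170

lemma kissingDefect_eq_zero_iff : kissingDefect Λ = 0 ↔ {x : Λ | ‖x‖ ^ 2 = 4}.ncard = 15170 := by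
  rw [kissingDefect, sub_eq_zero]
  exact_mod_cast Iff.rfl

variable [InnerProductSpace ℝ E] [FiniteDimensional ℝ E] [DiscreteTopology Λ]

lemma isBigO_thetaSeries_norm_sq_sub (hint : ∀ x ∈ Λ, ∃ k : ℤ, ‖x‖ ^ 2 = k) {m : ℕ} (hm : 0 < m)
    (hmin : ∀ x ∈ Λ, x ≠ 0 → m ≤ ‖x‖ ^ 2) :
    (thetaSeries (fun x : Λ => ‖x‖ ^ 2) -
      (1 + ({x : Λ | ‖x‖ ^ 2 = m}.ncard : ℂ) • nomePow m)) =O[atImInfty] nomePow (m + 1) := by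
  classical
  have hfin : {x : Λ | ‖x‖ ^ 2 = m}.Finite :=
    (isThetaFamily_norm_sq.finite_setOf_le m).subset fun x hx => le_of_eq hx
  have hsum : ∑ x ∈ insert 0 hfin.toFinset, nomePow (‖x‖ ^ 2) =
      1 + ({x : Λ | ‖x‖ ^ 2 = m}.ncard : ℂ) • nomePow m := by
    have hconst : ∀ x ∈ hfin.toFinset, nomePow (‖x‖ ^ 2) = nomePow m := fun x hx => by
      rw [(hfin.mem_toFinset.mp hx : ‖x‖ ^ 2 = m)]
    rw [Finset.sum_insert (by simpa using (Nat.cast_pos.mpr hm).ne),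
      Finset.sum_congr rfl hconst, Finset.sum_const, ← Set.ncard_eq_toFinset_card _ hfin,
      norm_zero, zero_pow two_ne_zero, nomePow_zero, Nat.cast_smul_eq_nsmul]
  rw [← hsum]
  refine isThetaFamily_norm_sq.isBigO_sub_sum _ fun x hx => ?_
  obtain ⟨hx0, hxm⟩ : x ≠ 0 ∧ ‖x‖ ^ 2 ≠ m := by simpa [not_or] using hx
  obtain ⟨k, hk⟩ := hint x x.2
  have hmk : (m : ℝ) < k := hk ▸ (hmin x x.2 (by simpa using hx0)).lt_of_ne' hxm
  change (m + 1 : ℝ) ≤ ‖(x : E)‖ ^ 2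
  rw [hk]
  exact_mod_cast hmk

variable {u : E}

lemma isBigO_latticeTriple_zero_sub (hΛ : dualLattice Λ = Λ)
    (hmin : ∀ x ∈ Λ, x ≠ 0 → 4 ≤ ‖x‖ ^ 2) :
    (latticeTriple Λ u 0 - extremalTriple 0 - kissingDefect Λ • nomePow 4)
      =O[atImInfty] nomePow 5 := by
  have hθ := isBigO_thetaSeries_norm_sq_sub (m := 4) (fun x => exists_norm_sq_eq_intCast hΛ)
    (by norm_num) (by simpa using hmin)
  have hpow : nomePow 1 ^ 4 = nomePow 4 := by simp [← nomePow_natCast_mul]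
  have hG := isBigO_extremalTriple_zero_sub
  rw [hpow] at hG
  norm_num at hθ
  refine (hθ.sub hG).congr_left fun τ => ?_
  simp only [latticeTriple, thetaTriple, kissingDefect, Pi.sub_apply, Pi.add_apply, Pi.mul_apply,
    Pi.smul_apply, Matrix.cons_val_zero, smul_eq_mul]
  norm_num
  ring

variable [IsZLattice ℝ Λ]

theorem IsHalfCharacteristic.exists_norm_add_sq_eq_finrank (hu : IsHalfCharacteristic Λ u)
    (hΛ : dualLattice Λ = Λ) (x : Λ) : ∃ k : ℤ, ‖u + x‖ ^ 2 = finrank ℝ E / 4 + 2 * k := by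
  obtain ⟨k, hk⟩ := hu.exists_norm_add_sq_eq hΛ x.2
  obtain ⟨l, hl⟩ := hu.exists_norm_sq_eq hΛ
  exact ⟨l + k, by rw [hk, hl]; push_cast; ring⟩

lemma IsHalfCharacteristic.add_two_le_norm_add_sq (hu : IsHalfCharacteristic Λ u)
    (hΛ : dualLattice Λ = Λ) {x : Λ} {k : ℤ} (h : (finrank ℝ E / 4 + 2 * k : ℝ) < ‖u + x‖ ^ 2) :
    (finrank ℝ E / 4 + 2 * (k + 1) : ℝ) ≤ ‖u + x‖ ^ 2 := by
  obtain ⟨l, hl⟩ := hu.exists_norm_add_sq_eq_finrank hΛ x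
  rw [hl] at h ⊢
  have hkl : k < l := by exact_mod_cast (by linarith : (k : ℝ) < l)
  have hkl' : (k + 1 : ℝ) ≤ l := by exact_mod_cast hkl
  linarith

-- Twice a shadow vector lies in `Λ`, so its norm is at least `4` as well.
lemma nine_fourths_le_norm_add_sq (hΛ : dualLattice Λ = Λ) (hu : IsHalfCharacteristic Λ u)
    (hdim : finrank ℝ E = 41) (hmin : ∀ x ∈ Λ, x ≠ 0 → 4 ≤ ‖x‖ ^ 2) (x : Λ) :
    9 / 4 ≤ ‖u + x‖ ^ 2 := by
  have hgap {k : ℤ} := hu.add_two_le_norm_add_sq hΛ (x := x) (k := k)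
  rw [hdim] at hgap
  have hquarter : 1 / 4 ≤ ‖u + x‖ ^ 2 := by
    have := hgap (k := -6) (by push_cast; linarith [sq_nonneg ‖u + x‖])
    push_cast at this
    linarith
  have hnorm : ‖(2 : ℤ) • (u + x)‖ ^ 2 = 4 * ‖u + x‖ ^ 2 := by
    rw [← Int.cast_smul_eq_zsmul ℝ, norm_smul, mul_pow]
    norm_num
  have hmem : (2 : ℤ) • (u + x) ∈ Λ := by
    rw [smul_add]
    exact add_mem (hu.two_smul_mem hΛ) (Λ.smul_mem 2 x.2)
  have hfour := hmin _ hmem fun h => by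
    rw [h, norm_zero] at hnorm
    linarith
  have := hgap (k := -5) (by push_cast; linarith)
  push_cast at this
  linarith

lemma latticeTriple_eq_extremalTriple_of_isBigO (hΛ : dualLattice Λ = Λ)
    (hu : IsHalfCharacteristic Λ u) (hdim : finrank ℝ E = 41) {a b : ℝ}
    (h0 : (latticeTriple Λ u 0 - extremalTriple 0) =O[atImInfty] nomePow a)
    (h2 : ∀ x : Λ, b ≤ ‖u + x‖ ^ 2) (hb : b ≤ 17 / 4) (hab : 41 / 4 < 2 * a + b) :
    latticeTriple Λ u = extremalTriple := by
  have hG2 : extremalTriple 2 =O[atImInfty] nomePow b :=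
    isEquivalent_extremalTriple_two.isBigO.trans
      (((isBigO_refl _ _).const_mul_left _).trans (nomePow_isBigO hb))
  have hΘ2 : latticeTriple Λ u 2 =O[atImInfty] nomePow b :=
    (isThetaFamily_norm_add_sq u).isBigO_thetaSeries_iff.mpr h2
  have htriple := isThetaTriple_latticeTriple hΛ hu
  rw [cexp_norm_sq_eq_jacobiMultiplier_pow hΛ hu, hdim] at htriple
  refine sub_eq_zero.mp ((htriple.sub isThetaTriple_extremalTriple).eq_zero_of_isBigO ?_ h0
    (hΘ2.sub hG2) (by exact_mod_cast hab))
  rw [← pow_mul, show 41 * 8 = 4 * 82 by norm_num, pow_mul, jacobiMultiplier_pow_four]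
  norm_num

theorem ncard_eq_iff_latticeTriple_eq_extremalTriple (hΛ : dualLattice Λ = Λ)
    (hu : IsHalfCharacteristic Λ u) (hdim : finrank ℝ E = 41)
    (hmin : ∀ x ∈ Λ, x ≠ 0 → 4 ≤ ‖x‖ ^ 2) :
    {x : Λ | ‖x‖ ^ 2 = 4}.ncard = 15170 ↔ latticeTriple Λ u = extremalTriple := by
  have hexp := isBigO_latticeTriple_zero_sub (u := u) hΛ hmin
  rw [← kissingDefect_eq_zero_iff]
  refine ⟨fun h => ?_, fun h => ?_⟩
  · rw [h, zero_smul, sub_zero] at hexp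
    exact latticeTriple_eq_extremalTriple_of_isBigO hΛ hu hdim hexp
      (nine_fourths_le_norm_add_sq hΛ hu hdim hmin) (by norm_num) (by norm_num)
  · rw [h, sub_self, zero_sub] at hexp
    by_contra hne
    exact not_nomePow_isBigO (by norm_num)
      ((isBigO_const_smul_left hne).mp (isBigO_neg_left.mp hexp))

theorem isLeast_iff_latticeTriple_eq_extremalTriple (hΛ : dualLattice Λ = Λ)
    (hu : IsHalfCharacteristic Λ u) (hdim : finrank ℝ E = 41)
    (hmin : ∀ x ∈ Λ, x ≠ 0 → 4 ≤ ‖x‖ ^ 2) :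
    IsLeast (Set.range fun x : Λ => ‖u + x‖ ^ 2) (17 / 4) ↔
      latticeTriple Λ u = extremalTriple := by
  refine ⟨fun h => ?_, fun h => ?_⟩
  · have hexp := isBigO_latticeTriple_zero_sub (u := u) hΛ hmin
    have h0 : (latticeTriple Λ u 0 - extremalTriple 0) =O[atImInfty] nomePow 4 := by
      refine ((hexp.trans (nomePow_isBigO (by norm_num))).add
        ((isBigO_refl (nomePow 4) _).const_smul_left (kissingDefect Λ))).congr_left fun τ => ?_
      simp
    exact latticeTriple_eq_extremalTriple_of_isBigO hΛ hu hdim h0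
      (fun x => h.2 ⟨x, rfl⟩) le_rfl (by norm_num)
  · have hiff {r : ℝ} : extremalTriple 2 =O[atImInfty] nomePow r ↔ ∀ x : Λ, r ≤ ‖u + x‖ ^ 2 := by
      rw [← h]
      exact (isThetaFamily_norm_add_sq u).isBigO_thetaSeries_iff
    have hG2 := isEquivalent_extremalTriple_two
    have hle := hiff.mp (hG2.isBigO.trans ((isBigO_refl _ _).const_mul_left _))
    refine ⟨?_, by rintro _ ⟨x, rfl⟩; exact hle x⟩
    by_contra hne
    have hgt (x : Λ) : 25 / 4 ≤ ‖u + x‖ ^ 2 := by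
      have hlt : 17 / 4 < ‖u + x‖ ^ 2 := (hle x).lt_of_ne fun h => hne ⟨x, h.symm⟩
      have hgap := hu.add_two_le_norm_add_sq hΛ (x := x) (k := -3)
        (by rw [hdim]; push_cast; linarith)
      rw [hdim] at hgap
      push_cast at hgap
      linarith
    refine not_nomePow_isBigO (by norm_num : (17 / 4 : ℝ) < 25 / 4) ?_
    exact (isBigO_const_mul_left_iff (by norm_num)).mp (hG2.symm.isBigO.trans (hiff.mpr hgt))

end ExtremalLattices

section UnimodularLattices

variable {n : ℕ} {L : Set (EuclideanSpace ℝ (Fin n))}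

lemma exists_sub_eq_intCast_of_two_mul {a b : ℝ} (ha2 : ∃ k : ℤ, 2 * a = k)
    (ha : ¬ ∃ k : ℤ, a = k) (hb2 : ∃ k : ℤ, 2 * b = k) (hb : ¬ ∃ k : ℤ, b = k) :
    ∃ k : ℤ, a - b = k := by
  have hodd {c : ℝ} {k : ℤ} (hk : 2 * c = k) (hc : ¬ ∃ k : ℤ, c = k) : Odd k := by
    by_contra heven
    obtain ⟨l, rfl⟩ := Int.not_odd_iff_even.mp heven
    exact hc ⟨l, by push_cast at hk; linarith⟩
  obtain ⟨⟨k, hk⟩, l, hl⟩ := And.intro ha2 hb2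
  obtain ⟨m, hm⟩ := (hodd hk ha).sub_odd (hodd hl hb)
  have hm' : (k : ℝ) - l = m + m := by exact_mod_cast hm
  exact ⟨m, by linarith⟩

namespace IsUnimodularLattice

lemma mem_iff (hL : IsUnimodularLattice L) {x : EuclideanSpace ℝ (Fin n)} :
    x ∈ L ↔ ∀ y ∈ L, ∃ k : ℤ, ⟪x, y⟫ = k :=
  Set.ext_iff.mp hL x

/-- A unimodular lattice as a subgroup of `ℝⁿ`. -/
def toSubmodule (hL : IsUnimodularLattice L) : Submodule ℤ (EuclideanSpace ℝ (Fin n)) where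
  carrier := L
  zero_mem' := hL.mem_iff.mpr fun y _ => ⟨0, by simp⟩
  add_mem' hx hx' := hL.mem_iff.mpr fun y hy => by
    obtain ⟨⟨k, hk⟩, l, hl⟩ := And.intro (hL.mem_iff.mp hx y hy) (hL.mem_iff.mp hx' y hy)
    exact ⟨k + l, by rw [inner_add_left, hk, hl, Int.cast_add]⟩
  smul_mem' a x hx := hL.mem_iff.mpr fun y hy => by
    obtain ⟨k, hk⟩ := hL.mem_iff.mp hx y hy
    exact ⟨a * k, by rw [← Int.cast_smul_eq_zsmul ℝ, real_inner_smul_left, hk, Int.cast_mul]⟩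

lemma dualLattice_toSubmodule (hL : IsUnimodularLattice L) :
    dualLattice hL.toSubmodule = hL.toSubmodule := by
  ext x
  rw [mem_dualLattice]
  exact hL.mem_iff.symm

instance (hL : IsUnimodularLattice L) : DiscreteTopology hL.toSubmodule :=
  discreteTopology_of_dualLattice_eq hL.dualLattice_toSubmodule

instance (hL : IsUnimodularLattice L) : IsZLattice ℝ hL.toSubmodule :=
  ⟨span_eq_top_of_dualLattice_eq hL.dualLattice_toSubmodule⟩

variable {u x y s : EuclideanSpace ℝ (Fin n)}

lemma exists_two_mul_inner_eq (hL : IsUnimodularLattice L)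
    (hu : IsHalfCharacteristic hL.toSubmodule u) (hx : x ∈ L) : ∃ k : ℤ, 2 * ⟪u, x⟫ = k := by
  obtain ⟨k, hk⟩ := hL.mem_iff.mp (hu.two_smul_mem hL.dualLattice_toSubmodule) x hx
  refine ⟨k, ?_⟩
  rw [← hk, ← Int.cast_smul_eq_zsmul ℝ, real_inner_smul_left, Int.cast_ofNat]

lemma mem_evenSublattice_iff (hL : IsUnimodularLattice L)
    (hu : IsHalfCharacteristic hL.toSubmodule u) (hx : x ∈ L) :
    x ∈ evenSublattice L ↔ ∃ k : ℤ, ⟪u, x⟫ = k := by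
  obtain ⟨m, hm⟩ := hu x hx
  simp only [evenSublattice, Set.mem_ofPred_eq, hx, true_and, normOf, real_inner_self_eq_norm_sq]
  constructor
  · rintro ⟨k, hk⟩
    exact ⟨k + m, by push_cast; linarith⟩
  · rintro ⟨k, hk⟩
    exact ⟨k - m, by push_cast; linarith⟩

lemma sub_mem_evenSublattice (hL : IsUnimodularLattice L)
    (hu : IsHalfCharacteristic hL.toSubmodule u) (hx : x ∈ L) (hx0 : x ∉ evenSublattice L)
    (hy : y ∈ L) (hy0 : y ∉ evenSublattice L) : x - y ∈ evenSublattice L := by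
  rw [hL.mem_evenSublattice_iff hu hx] at hx0
  rw [hL.mem_evenSublattice_iff hu hy] at hy0
  rw [hL.mem_evenSublattice_iff hu (hL.toSubmodule.sub_mem hx hy), inner_sub_right]
  exact exists_sub_eq_intCast_of_two_mul (hL.exists_two_mul_inner_eq hu hx) hx0
    (hL.exists_two_mul_inner_eq hu hy) hy0

lemma two_smul_mem_evenSublattice (hL : IsUnimodularLattice L)
    (hu : IsHalfCharacteristic hL.toSubmodule u) (hx : x ∈ L) :
    (2 : ℤ) • x ∈ evenSublattice L := by
  obtain ⟨k, hk⟩ := hL.exists_two_mul_inner_eq hu hx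
  refine (hL.mem_evenSublattice_iff hu (hL.toSubmodule.smul_mem 2 hx)).mpr ⟨k, ?_⟩
  rw [← Int.cast_smul_eq_zsmul ℝ, real_inner_smul_right, Int.cast_ofNat, hk]

lemma add_mem_shadow (hL : IsUnimodularLattice L) (hodd : IsOddLattice L)
    (hu : IsHalfCharacteristic hL.toSubmodule u) (hx : x ∈ L) : u + x ∈ shadow L := by
  refine ⟨fun y hy => ?_, fun hmem => ?_⟩
  · obtain ⟨k, hk⟩ := (hL.mem_evenSublattice_iff hu hy.1).mp hy
    obtain ⟨l, hl⟩ := hL.mem_iff.mp hx y hy.1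
    exact ⟨k + l, by rw [inner_add_left, hk, hl, Int.cast_add]⟩
  · have huL : u ∈ L := (hL.toSubmodule.add_mem_iff_left hx).mp hmem
    obtain ⟨z, hz, m, hm, hzm⟩ := hodd
    obtain ⟨-, k, hk⟩ := (hL.mem_evenSublattice_iff hu hz).mpr (hL.mem_iff.mp huL z hz)
    have hmk : m = 2 * k := by exact_mod_cast hzm.symm.trans hk
    exact Int.not_odd_iff_even.mpr (hmk ▸ even_two_mul k) hm

-- Both `s` and `u` pair integrally with `L₀` and half-integrally with the other coset of `L₀` in
-- `L`, so their difference pairs integrally with all of `L`.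
lemma sub_mem_of_mem_shadow (hL : IsUnimodularLattice L)
    (hu : IsHalfCharacteristic hL.toSubmodule u) (hs : s ∈ shadow L) : s - u ∈ L := by
  obtain ⟨hsL₀, hsL⟩ := hs
  obtain ⟨w, hw, hsw⟩ : ∃ w ∈ L, ¬ ∃ k : ℤ, ⟪s, w⟫ = k := by
    by_contra! h
    exact hsL (hL.mem_iff.mpr h)
  have hw0 : w ∉ evenSublattice L := fun h => hsw (hsL₀ w h)
  have heven {y} (hy : y ∈ evenSublattice L) : ∃ k : ℤ, ⟪s - u, y⟫ = k := by
    obtain ⟨⟨k, hk⟩, l, hl⟩ :=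
      And.intro (hsL₀ y hy) ((hL.mem_evenSublattice_iff hu hy.1).mp hy)
    exact ⟨k - l, by rw [inner_sub_left, hk, hl, Int.cast_sub]⟩
  have hsw2 : ∃ k : ℤ, 2 * ⟪s, w⟫ = k := by
    obtain ⟨k, hk⟩ := hsL₀ _ (hL.two_smul_mem_evenSublattice hu hw)
    exact ⟨k, by rw [← hk, ← Int.cast_smul_eq_zsmul ℝ, real_inner_smul_right, Int.cast_ofNat]⟩
  obtain ⟨k, hk⟩ := exists_sub_eq_intCast_of_two_mul hsw2 hsw (hL.exists_two_mul_inner_eq hu hw)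
    (by rwa [← hL.mem_evenSublattice_iff hu hw])
  refine hL.mem_iff.mpr fun y hy => ?_
  by_cases hy0 : y ∈ evenSublattice L
  · exact heven hy0
  · obtain ⟨l, hl⟩ := heven (hL.sub_mem_evenSublattice hu hy hy0 hw hw0)
    refine ⟨l + k, ?_⟩
    rw [Int.cast_add, ← hl, ← hk, ← inner_sub_left, ← inner_add_right, sub_add_cancel]

lemma image_normOf_shadow (hL : IsUnimodularLattice L) (hodd : IsOddLattice L)
    (hu : IsHalfCharacteristic hL.toSubmodule u) :
    {r | ∃ s ∈ shadow L, normOf s = r} = Set.range fun x : hL.toSubmodule => ‖u + x‖ ^ 2 := by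
  ext r
  simp only [normOf, real_inner_self_eq_norm_sq]
  constructor
  · rintro ⟨s, hs, rfl⟩
    exact ⟨⟨s - u, hL.sub_mem_of_mem_shadow hu hs⟩, by simp⟩
  · rintro ⟨x, rfl⟩
    exact ⟨u + x, hL.add_mem_shadow hodd hu x.2, rfl⟩

lemma hasSigma_iff (hL : IsUnimodularLattice L) (hodd : IsOddLattice L)
    (hu : IsHalfCharacteristic hL.toSubmodule u) {r : ℝ} :
    HasSigma L r ↔ IsLeast (Set.range fun x : hL.toSubmodule => ‖u + x‖ ^ 2) (r / 4) := by
  rw [← hL.image_normOf_shadow hodd hu]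
  constructor
  · rintro ⟨s, hs, rfl⟩
    rwa [mul_div_cancel_left₀ s four_ne_zero]
  · exact fun h => ⟨r / 4, h, by ring⟩

lemma numVecsOfNorm_eq_ncard (hL : IsUnimodularLattice L) (r : ℝ) :
    numVecsOfNorm L r = {x : hL.toSubmodule | ‖x‖ ^ 2 = r}.ncard := by
  rw [numVecsOfNorm, ← Set.ncard_image_of_injective _ Subtype.val_injective]
  congr 1
  ext x
  simp only [normOf, real_inner_self_eq_norm_sq]
  constructor
  · rintro ⟨hx, hr⟩
    exact ⟨⟨x, hx⟩, hr, rfl⟩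
  · rintro ⟨y, hr, rfl⟩
    exact ⟨y.2, hr⟩

end IsUnimodularLattice

end UnimodularLattices

theorem kissing_number_dim41 {L : Set (EuclideanSpace ℝ (Fin 41))}
    (huni : IsUnimodularLattice L) (hodd : IsOddLattice L) (hmin : HasMinNorm L 4) :
    numVecsOfNorm L 4 = 15170 ↔ HasSigma L 17 := by
  have hself := huni.dualLattice_toSubmodule
  have hdim : Module.finrank ℝ (EuclideanSpace ℝ (Fin 41)) = 41 := finrank_euclideanSpace_fin
  have hfour : ∀ x ∈ huni.toSubmodule, x ≠ 0 → 4 ≤ ‖x‖ ^ 2 := fun x hx hx0 =>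
    hmin.2 ⟨x, hx, hx0, real_inner_self_eq_norm_sq x⟩
  obtain ⟨u, hu⟩ := exists_isHalfCharacteristic hself
  rw [huni.numVecsOfNorm_eq_ncard, huni.hasSigma_iff hodd hu,
    ncard_eq_iff_latticeTriple_eq_extremalTriple hself hu hdim hfour,
    isLeast_iff_latticeTriple_eq_extremalTriple hself hu hdim hfour]
end
end

section
/- There exists an odd unimodular lattice L in dimension 41 having minimum norm 4 with σ(L) = 17. -/
open scoped RealInnerProductSpace

noncomputable section

/-!
Construction A attaches to a self-dual `ℤ/4ℤ`-code `C` of length `n` the unimodular lattice of the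
vectors `v / 2`, where `v` runs through the integer vectors that reduce into `C`. Its residue code
`B` controls the short vectors: a vector `v` with nonzero residue satisfies `(v, v) ≥ d(B)`, while
`v = 2 u` lies in the code only if `u` reduces into the dual of `B`, so `(v, v) ≥ 4 d(Bᗮ)` unless
`u` is even as well. The lattice thus has minimum norm `4` as soon as `d(B) ≥ 16` and `d(Bᗮ) ≥ 4`.

The shadow consists of the vectors `u / 2` with `2 (u, c) ≡ (c, c)` modulo `8` on the code. Such `u`
is congruent modulo two to a codeword of `B` plus the all-ones vector, whence `(u, u) ≥ n - m` for
the maximal weight `m` of `B`, and `(u, u) ≡ n` modulo `8`. For `n = 41` and `m = 28` this gives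
`(u, u) ≥ 13` and `(u, u) ≡ 1` modulo `8`, hence `(u, u) ≥ 17`.

Any self-orthogonal `ℤ/4ℤ`-code extends to a self-dual one with the same residue code, so it is
enough to lift a binary `[41, 9]` code with weights between `16` and `28` and dual distance `4`
to a self-orthogonal `ℤ/4ℤ`-code, and to find one characteristic vector of norm `17`.
-/

section UnimodularLattices

variable {n : ℕ} {L : Set (EuclideanSpace ℝ (Fin n))} {x y : EuclideanSpace ℝ (Fin n)}

lemma normOf_add (x y : EuclideanSpace ℝ (Fin n)) :
    normOf (x + y) = normOf x + 2 * ⟪x, y⟫ + normOf y :=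
  real_inner_add_add_self x y

lemma add_mem_dualSet (hx : x ∈ dualSet L) (hy : y ∈ dualSet L) : x + y ∈ dualSet L := by
  intro z hz
  obtain ⟨a, ha⟩ := hx z hz
  obtain ⟨b, hb⟩ := hy z hz
  exact ⟨a + b, by rw [inner_add_left, ha, hb, Int.cast_add]⟩

namespace IsUnimodularLattice

lemma exists_inner_eq_intCast (hL : IsUnimodularLattice L) (hx : x ∈ L) (hy : y ∈ L) :
    ∃ m : ℤ, ⟪x, y⟫ = m := by
  have hx' : x ∈ dualSet L := hL ▸ hx
  exact hx' y hy

lemma add_mem (hL : IsUnimodularLattice L) (hx : x ∈ L) (hy : y ∈ L) : x + y ∈ L := by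
  rw [hL] at hx hy ⊢
  exact add_mem_dualSet hx hy

lemma add_mem_evenSublattice (hL : IsUnimodularLattice L) (hx : x ∈ L) (hy : y ∈ L) {a b : ℤ}
    (ha : normOf x = a) (hb : normOf y = b) (hab : Even (a + b)) :
    x + y ∈ evenSublattice L := by
  obtain ⟨k, hk⟩ := hL.exists_inner_eq_intCast hx hy
  obtain ⟨l, hl⟩ := hab.two_dvd
  refine ⟨hL.add_mem hx hy, k + l, ?_⟩
  have hl' : (a + b : ℝ) = 2 * l := by exact_mod_cast hl
  rw [normOf_add, ha, hb, hk, Int.cast_add]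
  linarith

lemma exists_odd_of_mem_shadow (hL : IsUnimodularLattice L) (hy : y ∈ shadow L) :
    ∃ z ∈ L, ∃ b k : ℤ, Odd b ∧ Odd k ∧ normOf z = b ∧ 2 * ⟪y, z⟫ = k := by
  obtain ⟨hy_dual, hy_not_mem⟩ := hy
  obtain ⟨z, hz, hyz⟩ : ∃ z ∈ L, ∀ m : ℤ, ⟪y, z⟫ ≠ m := by
    by_contra! h
    exact hy_not_mem (hL ▸ h)
  obtain ⟨b, hb⟩ : ∃ b : ℤ, normOf z = b := hL.exists_inner_eq_intCast hz hz
  obtain ⟨k, hk⟩ := hy_dual _ (hL.add_mem_evenSublattice hz hz hb hb (Even.add_self b))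
  have hk' : 2 * ⟪y, z⟫ = k := by rw [← hk, inner_add_right]; ring
  refine ⟨z, hz, b, k, ?_, ?_, hb, hk'⟩
  · by_contra hb_even
    obtain ⟨c, hc⟩ := (Int.not_odd_iff_even.1 hb_even).two_dvd
    obtain ⟨m, hm⟩ := hy_dual z ⟨hz, c, by rw [hb, hc]; push_cast; rfl⟩
    exact hyz m hm
  · by_contra hk_even
    obtain ⟨c, rfl⟩ := (Int.not_odd_iff_even.1 hk_even).two_dvd
    exact hyz c (by push_cast at hk'; linarith)

lemma two_mul_inner_of_mem_shadow (hL : IsUnimodularLattice L) (hy : y ∈ shadow L) (hx : x ∈ L) :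
    ∃ m : ℤ, 2 * ⟪y, x⟫ = normOf x + 2 * m := by
  obtain ⟨z, hz, b, k, hb_odd, hk_odd, hb, hk⟩ := hL.exists_odd_of_mem_shadow hy
  obtain ⟨a, ha⟩ : ∃ a : ℤ, normOf x = a := hL.exists_inner_eq_intCast hx hx
  rcases Int.even_or_odd a with ha_even | ha_odd
  · obtain ⟨c, rfl⟩ := ha_even.two_dvd
    obtain ⟨m, hm⟩ := hy.1 x ⟨hx, c, by rw [ha]; push_cast; rfl⟩
    exact ⟨m - c, by rw [hm, ha]; push_cast; ring⟩
  · obtain ⟨m, hm⟩ := hy.1 _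
      (hL.add_mem_evenSublattice hx hz ha hb (ha_odd.add_odd hb_odd))
    obtain ⟨c, hc⟩ := (ha_odd.add_odd hk_odd).two_dvd
    have hc' : (a + k : ℝ) = 2 * c := by exact_mod_cast hc
    rw [inner_add_right] at hm
    exact ⟨m - c, by rw [ha]; push_cast; linarith⟩

/-- In the classical terminology, `2 • y` is a characteristic vector of `L`. -/
theorem mem_shadow_iff (hL : IsUnimodularLattice L) (hodd : IsOddLattice L) :
    y ∈ shadow L ↔ ∀ x ∈ L, ∃ m : ℤ, 2 * ⟪y, x⟫ = normOf x + 2 * m := by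
  refine ⟨fun hy x hx => hL.two_mul_inner_of_mem_shadow hy hx, fun h => ⟨?_, fun hy => ?_⟩⟩
  · rintro x ⟨hx, c, hc⟩
    obtain ⟨m, hm⟩ := h x hx
    exact ⟨c + m, by push_cast; linarith⟩
  · obtain ⟨x, hx, a, ha_odd, ha⟩ := hodd
    obtain ⟨m, hm⟩ := h x hx
    obtain ⟨k, hk⟩ := hL.exists_inner_eq_intCast hy hx
    have h_even : 2 * k = a + 2 * m := by
      rw [hk, ha] at hm
      exact_mod_cast hm
    grind

end IsUnimodularLattice

end UnimodularLattices

section Codes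

variable {ι : Type*} {C D : Submodule ℤ (ι → ℤ)} {u v w : ι → ℤ}

instance (m : ℕ) : RingHomSurjective (Int.castRingHom (ZMod m)) :=
  ⟨ZMod.intCast_surjective⟩

/-- Coordinatewise reduction modulo two, as a semilinear map. -/
def residue : (ι → ℤ) →ₛₗ[Int.castRingHom (ZMod 2)] (ι → ZMod 2) where
  toFun v j := v j
  map_add' _ _ := funext fun _ => Int.cast_add _ _
  map_smul' _ _ := funext fun _ => Int.cast_mul _ _

@[simp]
lemma residue_apply (v : ι → ℤ) (j : ι) : residue v j = v j := rfl

lemma residue_surjective : Function.Surjective (residue : (ι → ℤ) → ι → ZMod 2) := fun b =>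
  ⟨fun j => (b j).cast, funext fun j => ZMod.intCast_zmod_cast (b j)⟩

lemma residue_eq_zero_iff : residue v = 0 ↔ ∃ u : ι → ℤ, v = (2 : ℤ) • u := by
  refine ⟨fun h => ?_, ?_⟩
  · choose u hu using fun j => (ZMod.intCast_zmod_eq_zero_iff_dvd (v j) 2).1 (congr_fun h j)
    exact ⟨u, funext hu⟩
  · rintro ⟨u, rfl⟩
    rw [map_smulₛₗ, show Int.castRingHom (ZMod 2) 2 = 0 from rfl, zero_smul]

/-- The residue code of a `ℤ/4ℤ`-code: its reduction modulo two. -/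
def residueCode (C : Submodule ℤ (ι → ℤ)) : Submodule (ZMod 2) (ι → ZMod 2) :=
  C.map residue

lemma residue_mem_residueCode (hv : v ∈ C) : residue v ∈ residueCode C :=
  Submodule.mem_map_of_mem hv

variable [Fintype ι]

/-- The dual of a linear code `B ⊆ Rⁿ` with respect to the dot product. -/
def dualCode {R : Type*} [CommRing R] (B : Submodule R (ι → R)) : Submodule R (ι → R) :=
  LinearMap.BilinForm.orthogonal (dotProductBilin R R) B

lemma mem_dualCode {R : Type*} [CommRing R] {B : Submodule R (ι → R)} {x : ι → R} :
    x ∈ dualCode B ↔ ∀ b ∈ B, b ⬝ᵥ x = 0 :=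
  Iff.rfl

lemma dualCode_dualCode {K : Type*} [Field K] (B : Submodule K (ι → K)) :
    dualCode (dualCode B) = B := by
  have h_symm : (dotProductBilin K K : LinearMap.BilinForm K (ι → K)).IsSymm :=
    ⟨fun x y => dotProduct_comm x y⟩
  refine LinearMap.BilinForm.orthogonal_orthogonal ?_ h_symm.isRefl B
  refine (LinearMap.IsRefl.nondegenerate_iff_separatingLeft h_symm.isRefl).2 fun x hx => ?_
  exact dotProduct_eq_zero x hx

lemma residue_dotProduct_residue_eq_zero_iff :
    residue v ⬝ᵥ residue w = 0 ↔ 2 ∣ v ⬝ᵥ w := by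
  have h_cast : residue v ⬝ᵥ residue w = ((v ⬝ᵥ w : ℤ) : ZMod 2) :=
    ((Int.castRingHom (ZMod 2)).map_dotProduct v w).symm
  rw [h_cast]
  exact ZMod.intCast_zmod_eq_zero_iff_dvd _ 2

lemma two_dvd_dotProduct_self_sub_one_dotProduct (v : ι → ℤ) : 2 ∣ v ⬝ᵥ v - 1 ⬝ᵥ v := by
  rw [← sub_dotProduct]
  refine Finset.dvd_sum fun j _ => ?_
  rw [Pi.sub_apply, Pi.one_apply, mul_comm]
  exact (Int.even_mul_pred_self (v j)).two_dvd

/-- Odd squares are congruent to one modulo eight. -/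
lemma dotProduct_self_modEq_card (hv : ∀ j, Odd (v j)) :
    v ⬝ᵥ v ≡ Fintype.card ι [ZMOD 8] := by
  have h_sum : v ⬝ᵥ v - Fintype.card ι = ∑ j, (v j ^ 2 - 1) := by
    simp [dotProduct, sq]
  refine (Int.modEq_iff_dvd.2 ?_).symm
  rw [h_sum]
  exact Finset.dvd_sum fun j _ => Int.eight_dvd_sq_sub_one_of_odd (hv j)

lemma hammingNorm_residue_le (v : ι → ℤ) : (hammingNorm (residue v) : ℤ) ≤ v ⬝ᵥ v := by
  rw [hammingNorm, Finset.card_eq_sum_ones, Finset.sum_filter]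
  push_cast
  refine Finset.sum_le_sum fun j _ => ?_
  split_ifs with hj
  · have h_ne : v j ≠ 0 := fun h => hj (by simp [h])
    have := mul_self_pos.2 h_ne
    omega
  · exact mul_self_nonneg (v j)

/-- The dual of a `ℤ/4ℤ`-code. A code in `(ℤ/4ℤ)ⁿ` is encoded by its preimage in `ℤⁿ`. -/
def quaternaryDual (C : Submodule ℤ (ι → ℤ)) : Submodule ℤ (ι → ℤ) where
  carrier := {x | ∀ c ∈ C, 4 ∣ x ⬝ᵥ c}
  zero_mem' c _ := by simp
  add_mem' hx hy c hc := by
    rw [add_dotProduct]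
    exact dvd_add (hx c hc) (hy c hc)
  smul_mem' a x hx c hc := by
    rw [smul_dotProduct]
    exact (hx c hc).mul_left a

lemma quaternaryDual_anti (h : C ≤ D) :
    quaternaryDual D ≤ quaternaryDual C :=
  fun _ hx c hc => hx c (h hc)

lemma span_le_quaternaryDual {s : Set (ι → ℤ)} (hs : ∀ x ∈ s, ∀ y ∈ s, 4 ∣ x ⬝ᵥ y) :
    Submodule.span ℤ s ≤ quaternaryDual (Submodule.span ℤ s) := by
  refine Submodule.span_le.2 fun x hx => ?_
  suffices Submodule.span ℤ s ≤ quaternaryDual (Submodule.span ℤ {x}) by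
    intro y hy
    rw [dotProduct_comm]
    exact this hy x (Submodule.mem_span_singleton_self x)
  refine Submodule.span_le.2 fun y hy c hc => ?_
  obtain ⟨a, rfl⟩ := Submodule.mem_span_singleton.1 hc
  rw [dotProduct_smul]
  exact (hs y hy x hx).mul_left a

/-- A self-dual `ℤ/4ℤ`-code, encoded by its preimage in `ℤⁿ`. -/
def IsSelfDual (C : Submodule ℤ (ι → ℤ)) : Prop :=
  C = quaternaryDual C

lemma residue_mem_dualCode_residueCode_iff :
    residue v ∈ dualCode (residueCode C) ↔ ∀ c ∈ C, 2 ∣ v ⬝ᵥ c := by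
  simp only [mem_dualCode, residueCode, Submodule.mem_map, forall_exists_index, and_imp,
    forall_apply_eq_imp_iff₂, residue_dotProduct_residue_eq_zero_iff, dotProduct_comm v]

lemma residue_mem_residueCode_iff :
    residue v ∈ residueCode C ↔
      ∀ e : ι → ℤ, residue e ∈ dualCode (residueCode C) → 2 ∣ v ⬝ᵥ e := by
  rw [← dualCode_dualCode (residueCode C), mem_dualCode, residue_surjective.forall,
    dualCode_dualCode]
  simp only [residue_dotProduct_residue_eq_zero_iff, dotProduct_comm v]

namespace IsSelfDual

lemma four_dvd_dotProduct (hC : IsSelfDual C) (hv : v ∈ C) (hw : w ∈ C) : 4 ∣ v ⬝ᵥ w := by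
  rw [hC] at hv
  exact hv w hw

lemma two_smul_mem_iff (hC : IsSelfDual C) :
    (2 : ℤ) • v ∈ C ↔ residue v ∈ dualCode (residueCode C) := by
  rw [residue_mem_dualCode_residueCode_iff]
  nth_rw 1 [hC]
  refine forall₂_congr fun c _ => ?_
  rw [smul_dotProduct, smul_eq_mul]
  omega

lemma four_smul_mem (hC : IsSelfDual C) (v : ι → ℤ) : (4 : ℤ) • v ∈ C := by
  rw [hC]
  intro c _
  rw [smul_dotProduct]
  exact dvd_mul_right 4 _

lemma two_smul_one_mem (hC : IsSelfDual C) : (2 : ℤ) • (1 : ι → ℤ) ∈ C := by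
  rw [hC.two_smul_mem_iff, residue_mem_dualCode_residueCode_iff]
  intro c hc
  have h_self := hC.four_dvd_dotProduct hc hc
  have h_parity := two_dvd_dotProduct_self_sub_one_dotProduct c
  omega

lemma le_dotProduct_self (hC : IsSelfDual C) {d d' : ℕ}
    (hd : ∀ b ∈ residueCode C, b ≠ 0 → d ≤ hammingNorm b)
    (hd' : ∀ b ∈ dualCode (residueCode C), b ≠ 0 → d' ≤ hammingNorm b)
    (hv : v ∈ C) (hv0 : v ≠ 0) : min (d : ℤ) (min (4 * d') 16) ≤ v ⬝ᵥ v := by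
  by_cases h_res : residue v = 0
  · obtain ⟨u, rfl⟩ := residue_eq_zero_iff.1 h_res
    suffices min (d' : ℤ) 4 ≤ u ⬝ᵥ u by
      rw [smul_dotProduct, dotProduct_smul, smul_eq_mul, smul_eq_mul]
      omega
    by_cases hu_res : residue u = 0
    · obtain ⟨t, rfl⟩ := residue_eq_zero_iff.1 hu_res
      have ht0 : t ≠ 0 := by rintro rfl; simp at hv0
      have ht_pos : 0 < t ⬝ᵥ t := lt_of_le_of_ne
        (Finset.sum_nonneg fun j _ => mul_self_nonneg (t j))
        (Ne.symm (dotProduct_self_eq_zero.not.2 ht0))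
      rw [smul_dotProduct, dotProduct_smul, smul_eq_mul, smul_eq_mul]
      omega
    · have := hd' _ (hC.two_smul_mem_iff.1 hv) hu_res
      have := hammingNorm_residue_le u
      omega
  · have := hd _ (residue_mem_residueCode hv) h_res
    have := hammingNorm_residue_le v
    omega

end IsSelfDual

/-- For a self-orthogonal `ℤ/4ℤ`-code `D` this is the self-dual code `D + 2 B`, where `B` consists
of the lifts of the dual of the residue code; it is encoded by the equations it satisfies. -/
def selfDualExtension (D : Submodule ℤ (ι → ℤ)) : Submodule ℤ (ι → ℤ) :=
  quaternaryDual D ⊓ (residueCode D).comap residue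

lemma le_selfDualExtension (hD : D ≤ quaternaryDual D) : D ≤ selfDualExtension D :=
  le_inf hD fun _ => residue_mem_residueCode

lemma residueCode_selfDualExtension (hD : D ≤ quaternaryDual D) :
    residueCode (selfDualExtension D) = residueCode D :=
  le_antisymm (Submodule.map_le_iff_le_comap.2 inf_le_right)
    (Submodule.map_mono (le_selfDualExtension hD))

lemma two_smul_mem_selfDualExtension (hv : residue v ∈ dualCode (residueCode D)) :
    (2 : ℤ) • v ∈ selfDualExtension D := by
  refine ⟨fun c hc => ?_, ?_⟩
  · have := residue_mem_dualCode_residueCode_iff.1 hv c hc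
    rw [smul_dotProduct, smul_eq_mul]
    omega
  · rw [SetLike.mem_coe, Submodule.mem_comap, residue_eq_zero_iff.2 ⟨v, rfl⟩]
    exact zero_mem _

lemma exists_eq_add_two_smul_of_mem_selfDualExtension (hD : D ≤ quaternaryDual D)
    (hv : v ∈ selfDualExtension D) :
    ∃ d ∈ D, ∃ e : ι → ℤ, residue e ∈ dualCode (residueCode D) ∧ v = d + (2 : ℤ) • e := by
  obtain ⟨d, hd, h_res⟩ := Submodule.mem_map.1 hv.2
  obtain ⟨e, he⟩ : ∃ e : ι → ℤ, v - d = (2 : ℤ) • e :=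
    residue_eq_zero_iff.1 (by rw [map_sub, h_res, sub_self])
  refine ⟨d, hd, e, residue_mem_dualCode_residueCode_iff.2 fun c hc => ?_, ?_⟩
  · have := sub_mem hv.1 (hD hd) c hc
    rw [he, smul_dotProduct, smul_eq_mul] at this
    omega
  · rw [← he, add_sub_cancel]

theorem isSelfDual_selfDualExtension (hD : D ≤ quaternaryDual D) :
    IsSelfDual (selfDualExtension D) := by
  refine le_antisymm (fun v hv w hw => ?_) fun v hv => ⟨?_, ?_⟩
  · obtain ⟨d, hd, e, he, rfl⟩ := exists_eq_add_two_smul_of_mem_selfDualExtension hD hw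
    have h_four : 4 ∣ v ⬝ᵥ d := hv.1 d hd
    have h_two : 2 ∣ v ⬝ᵥ e := residue_mem_residueCode_iff.1 hv.2 e he
    rw [dotProduct_add, dotProduct_smul, smul_eq_mul]
    omega
  · exact quaternaryDual_anti (le_selfDualExtension hD) hv
  · refine residue_mem_residueCode_iff.2 fun e he => ?_
    have := hv _ (two_smul_mem_selfDualExtension he)
    rw [dotProduct_smul, smul_eq_mul] at this
    omega

/-- Characteristic vectors of a `ℤ/4ℤ`-code `C`: those `u` for which `y = u / 2` satisfies the
shadow condition `2 * ⟪y, x⟫ ≡ ⟪x, x⟫ (mod 2)` on all vectors `x = c / 2`, `c ∈ C`. -/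
def IsCharacteristic (C : Submodule ℤ (ι → ℤ)) (u : ι → ℤ) : Prop :=
  ∀ c ∈ C, 8 ∣ 2 * (u ⬝ᵥ c) - c ⬝ᵥ c

lemma isCharacteristic_span {s : Set (ι → ℤ)} (hs : ∀ x ∈ s, ∀ y ∈ s, 4 ∣ x ⬝ᵥ y)
    (hu : ∀ x ∈ s, 8 ∣ 2 * (u ⬝ᵥ x) - x ⬝ᵥ x) : IsCharacteristic (Submodule.span ℤ s) u := by
  intro c hc
  induction hc using Submodule.span_induction with
  | mem x hx => exact hu x hx
  | zero => simp
  | add x y hx hy ihx ihy =>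
    have h_cross : 4 ∣ x ⬝ᵥ y := span_le_quaternaryDual hs hx y hy
    rw [dotProduct_add, dotProduct_add, add_dotProduct, add_dotProduct, dotProduct_comm y x]
    omega
  | smul a x hx ih =>
    obtain ⟨k, hk⟩ := ih
    obtain ⟨l, hl⟩ : 4 ∣ x ⬝ᵥ x := span_le_quaternaryDual hs hx x hx
    obtain ⟨q, hq⟩ := (Int.even_mul_pred_self a).two_dvd
    refine ⟨a * k - q * l, ?_⟩
    simp only [dotProduct_smul, smul_dotProduct, smul_eq_mul]
    linear_combination a * hk - 4 * l * hq - (a * (a - 1)) * hl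

lemma IsCharacteristic.selfDualExtension (hD : D ≤ quaternaryDual D) (hu : IsCharacteristic D u)
    (hu_res : residue (u - 1) ∈ residueCode D) : IsCharacteristic (selfDualExtension D) u := by
  intro c hc
  obtain ⟨d, hd, e, he, rfl⟩ := exists_eq_add_two_smul_of_mem_selfDualExtension hD hc
  have h_char := hu d hd
  have h_orth : 2 ∣ e ⬝ᵥ d := residue_mem_dualCode_residueCode_iff.1 he d hd
  have h_res : 2 ∣ (u - 1) ⬝ᵥ e := residue_mem_residueCode_iff.1 hu_res e he
  have h_parity := two_dvd_dotProduct_self_sub_one_dotProduct e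
  rw [sub_dotProduct] at h_res
  simp only [dotProduct_add, add_dotProduct, dotProduct_smul, smul_dotProduct, smul_eq_mul,
    dotProduct_comm d e]
  omega

namespace IsCharacteristic

lemma residue_sub_one_mem (hu : IsCharacteristic C u) (hC : IsSelfDual C) :
    residue (u - 1) ∈ residueCode C := by
  refine residue_mem_residueCode_iff.2 fun e he => ?_
  have h_char := hu _ (hC.two_smul_mem_iff.2 he)
  have h_parity := two_dvd_dotProduct_self_sub_one_dotProduct e
  simp only [dotProduct_smul, smul_dotProduct, smul_eq_mul] at h_char
  rw [sub_dotProduct]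
  omega

lemma dotProduct_self_modEq (hu : IsCharacteristic C u) (hC : IsSelfDual C) :
    u ⬝ᵥ u ≡ Fintype.card ι [ZMOD 8] := by
  obtain ⟨c, hc, h_res⟩ := Submodule.mem_map.1 (hu.residue_sub_one_mem hC)
  obtain ⟨t, ht⟩ : ∃ t : ι → ℤ, (u - 1) - c = (2 : ℤ) • t :=
    residue_eq_zero_iff.1 (by rw [map_sub, h_res, sub_self])
  have h_odd : ∀ j, Odd ((u - c) j) := fun j => ⟨t j, by
    have := congr_fun ht j
    simp only [Pi.sub_apply, Pi.one_apply, Pi.smul_apply, smul_eq_mul] at this ⊢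
    omega⟩
  have h_expand : (u - c) ⬝ᵥ (u - c) = u ⬝ᵥ u - (2 * (u ⬝ᵥ c) - c ⬝ᵥ c) := by
    rw [sub_dotProduct, dotProduct_sub, dotProduct_sub, dotProduct_comm c u]
    ring
  have h_char := hu c hc
  have h_card := (dotProduct_self_modEq_card h_odd).symm.dvd
  refine (Int.modEq_iff_dvd.2 ?_).symm
  omega

lemma card_le (hu : IsCharacteristic C u) (hC : IsSelfDual C) {m : ℕ}
    (hm : ∀ b ∈ residueCode C, hammingNorm b ≤ m) : (Fintype.card ι : ℤ) ≤ u ⬝ᵥ u + m := by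
  have h_card : hammingNorm (1 : ι → ZMod 2) = Fintype.card ι := by
    simp [hammingNorm]
  have h_triangle := hammingDist_triangle (residue (u - 1)) 0 (residue u)
  have h_sub : residue u - residue (u - 1) = (1 : ι → ZMod 2) := by
    ext j
    simp
  rw [hammingDist_eq_hammingNorm, neg_add_eq_sub, h_sub, h_card, hammingDist_zero_right,
    hammingDist_zero_left] at h_triangle
  have h_weight := hm _ (hu.residue_sub_one_mem hC)
  have h_norm := hammingNorm_residue_le u
  omega

end IsCharacteristic

lemma dotProduct_eq_sum_support (b x : ι → ZMod 2) :
    b ⬝ᵥ x = ∑ j with x j ≠ 0, b j := by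
  rw [dotProduct, Finset.sum_filter]
  refine Finset.sum_congr rfl fun j _ => ?_
  have h_bit : x j = 0 ∨ x j = 1 := by generalize x j = a; revert a; decide
  rcases h_bit with h | h <;> simp [h]

lemma lt_hammingNorm_of_mem_dualCode {B : Submodule (ZMod 2) (ι → ZMod 2)}
    {d : ℕ} (hB : ∀ s : Finset ι, s.Nonempty → s.card ≤ d → ∃ b ∈ B, ∑ j ∈ s, b j ≠ 0)
    {x : ι → ZMod 2} (hx : x ∈ dualCode B) (hx0 : x ≠ 0) : d < hammingNorm x := by
  by_contra! h_le
  obtain ⟨j, hj⟩ := Function.ne_iff.1 hx0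
  obtain ⟨b, hb, hb_sum⟩ := hB (Finset.univ.filter fun j => x j ≠ 0) ⟨j, by simpa using hj⟩ h_le
  exact hb_sum (dotProduct_eq_sum_support b x ▸ hx b hb)

end Codes

section ConstructionA

variable {n : ℕ} {C : Submodule ℤ (Fin n → ℤ)} {v w : Fin n → ℤ}

/-- The vector `v / 2` of `ℝⁿ`; Construction A scales integer vectors by `1 / √4`. -/
def half (v : Fin n → ℤ) : EuclideanSpace ℝ (Fin n) :=
  WithLp.toLp 2 fun j => (v j : ℝ) / 2

lemma inner_half (v w : Fin n → ℤ) : ⟪half v, half w⟫ = ((v ⬝ᵥ w : ℤ) : ℝ) / 4 := by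
  simp only [half, PiLp.inner_apply, dotProduct, Int.cast_sum, Int.cast_mul, Finset.sum_div,
    RCLike.inner_apply, conj_trivial]
  exact Finset.sum_congr rfl fun j _ => by ring

lemma normOf_half (v : Fin n → ℤ) : normOf (half v) = ((v ⬝ᵥ v : ℤ) : ℝ) / 4 :=
  inner_half v v

lemma exists_inner_half_eq_intCast_iff : (∃ m : ℤ, ⟪half v, half w⟫ = m) ↔ 4 ∣ v ⬝ᵥ w := by
  refine exists_congr fun m => ?_
  rw [inner_half, div_eq_iff four_ne_zero, mul_comm]
  norm_cast

lemma exists_eq_half {x : EuclideanSpace ℝ (Fin n)}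
    (hx : ∀ v : Fin n → ℤ, ∃ m : ℤ, ⟪x, half ((4 : ℤ) • v)⟫ = m) : ∃ v, x = half v := by
  have h_coord : ∀ j, ∃ m : ℤ, x j = m / 2 := fun j => by
    obtain ⟨m, hm⟩ := hx (Pi.single j 1)
    have h_half : half ((4 : ℤ) • Pi.single j 1) = EuclideanSpace.single j 2 := by
      ext i
      by_cases hij : i = j
      · subst hij; norm_num [half]
      · simp [half, hij]
    rw [h_half, EuclideanSpace.inner_single_right] at hm
    refine ⟨m, ?_⟩
    rw [← hm]
    simp
  choose v hv using h_coord
  exact ⟨v, PiLp.ext hv⟩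

/-- The lattice obtained from a `ℤ/4ℤ`-code by Construction A. -/
def constructionA (C : Submodule ℤ (Fin n → ℤ)) : Set (EuclideanSpace ℝ (Fin n)) :=
  half '' C

theorem isUnimodularLattice_constructionA (hC : IsSelfDual C) :
    IsUnimodularLattice (constructionA C) := by
  refine Set.Subset.antisymm ?_ fun x hx => ?_
  · rintro _ ⟨v, hv, rfl⟩ _ ⟨w, hw, rfl⟩
    exact exists_inner_half_eq_intCast_iff.2 (hC.four_dvd_dotProduct hv hw)
  · obtain ⟨v, rfl⟩ := exists_eq_half fun v => hx _ ⟨_, hC.four_smul_mem v, rfl⟩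
    refine ⟨v, ?_, rfl⟩
    rw [hC]
    exact fun c hc => exists_inner_half_eq_intCast_iff.1 (hx _ ⟨c, hc, rfl⟩)

theorem isOddLattice_constructionA (hC : IsSelfDual C) (hn : Odd n) :
    IsOddLattice (constructionA C) := by
  refine ⟨_, ⟨_, hC.two_smul_one_mem, rfl⟩, n, (Int.odd_coe_nat n).2 hn, ?_⟩
  rw [normOf_half, div_eq_iff four_ne_zero]
  simp [dotProduct]

theorem hasMinNorm_constructionA [NeZero n] (hC : IsSelfDual C)
    (hd : ∀ b ∈ residueCode C, b ≠ 0 → 16 ≤ hammingNorm b)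
    (hd' : ∀ b ∈ dualCode (residueCode C), b ≠ 0 → 4 ≤ hammingNorm b) :
    HasMinNorm (constructionA C) 4 := by
  constructor
  · have h_norm : normOf (half ((4 : ℤ) • Pi.single (0 : Fin n) 1)) = 4 := by
      rw [normOf_half]
      simp only [smul_dotProduct, dotProduct_smul, single_dotProduct, Pi.single_eq_same,
        smul_eq_mul]
      norm_num
    refine ⟨_, ⟨_, hC.four_smul_mem _, rfl⟩, fun h_zero => ?_, h_norm⟩
    rw [h_zero, normOf, inner_zero_left] at h_norm
    norm_num at h_norm
  · rintro _ ⟨_, ⟨v, hv, rfl⟩, h_ne, rfl⟩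
    have hv0 : v ≠ 0 := by
      rintro rfl
      exact h_ne (by ext j; simp [half])
    have h_bound : (16 : ℤ) ≤ v ⬝ᵥ v := by
      have := hC.le_dotProduct_self hd hd' hv hv0
      omega
    rw [normOf_half, le_div_iff₀ four_pos]
    exact_mod_cast h_bound

theorem shadow_constructionA (hC : IsSelfDual C) (hn : Odd n) :
    shadow (constructionA C) = half '' {u | IsCharacteristic C u} := by
  have h_char : ∀ u c : Fin n → ℤ,
      (∃ m : ℤ, 2 * ⟪half u, half c⟫ = normOf (half c) + 2 * m) ↔ 8 ∣ 2 * (u ⬝ᵥ c) - c ⬝ᵥ c := by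
    refine fun u c => exists_congr fun m => ?_
    rw [inner_half, normOf_half, ← @Int.cast_inj ℝ]
    push_cast
    constructor <;> intro h <;> linarith
  ext x
  rw [(isUnimodularLattice_constructionA hC).mem_shadow_iff (isOddLattice_constructionA hC hn)]
  constructor
  · intro hx
    obtain ⟨u, rfl⟩ : ∃ u, x = half u := exists_eq_half fun v => by
      obtain ⟨m, hm⟩ := hx _ ⟨_, hC.four_smul_mem v, rfl⟩
      refine ⟨2 * (v ⬝ᵥ v) + m, ?_⟩
      rw [normOf_half, smul_dotProduct, dotProduct_smul] at hm
      push_cast [smul_eq_mul] at hm ⊢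
      linarith
    exact ⟨u, fun c hc => (h_char u c).1 (hx _ ⟨c, hc, rfl⟩), rfl⟩
  · rintro ⟨u, hu, rfl⟩ _ ⟨c, hc, rfl⟩
    exact (h_char u c).2 (hu c hc)

lemma hasSigma_constructionA (hC : IsSelfDual C) (hn : Odd n) {r : ℤ}
    (hr : IsLeast ((fun u => u ⬝ᵥ u) '' {u | IsCharacteristic C u}) r) :
    HasSigma (constructionA C) r := by
  refine ⟨r / 4, ?_, by ring⟩
  rw [HasShadowMinNorm, shadow_constructionA hC hn]
  obtain ⟨⟨u, hu, rfl⟩, h_least⟩ := hr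
  refine ⟨⟨_, ⟨u, hu, rfl⟩, normOf_half u⟩, ?_⟩
  rintro _ ⟨_, ⟨w, hw, rfl⟩, rfl⟩
  rw [normOf_half]
  gcongr
  exact_mod_cast h_least ⟨w, hw, rfl⟩

end ConstructionA

section BitVectors

/-- The vector whose coordinates are the `n` lowest binary digits of `x`. -/
def bitVector (R : Type*) [Zero R] [One R] (n x : ℕ) : Fin n → R :=
  fun j => if x.testBit j then 1 else 0

/-- The list of all bitwise sums of sublists of a list of binary words. -/
def xorSpan : List ℕ → List ℕ
  | [] => [0]
  | r :: l => xorSpan l ++ (xorSpan l).map (r ^^^ ·)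

variable {n : ℕ}

lemma bitVector_zero (R : Type*) [Zero R] [One R] : bitVector R n 0 = 0 := by
  ext j
  simp [bitVector]

lemma bitVector_xor (x y : ℕ) :
    bitVector (ZMod 2) n (x ^^^ y) = bitVector (ZMod 2) n x + bitVector (ZMod 2) n y := by
  ext j
  simp only [bitVector, Nat.testBit_xor, Pi.add_apply]
  cases x.testBit j <;> cases y.testBit j <;> decide

lemma residue_bitVector (x : ℕ) : residue (bitVector ℤ n x) = bitVector (ZMod 2) n x := by
  ext j
  simp only [residue_apply, bitVector, Int.cast_ite, Int.cast_one, Int.cast_zero]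

lemma hammingNorm_bitVector (x : ℕ) :
    hammingNorm (bitVector (ZMod 2) n x) =
      (Finset.univ.filter fun j : Fin n => x.testBit j).card := by
  simp [hammingNorm, bitVector]

lemma mem_span_bitVector_iff {l : List ℕ} {b : Fin n → ZMod 2} :
    b ∈ Submodule.span (ZMod 2) (bitVector (ZMod 2) n '' {r | r ∈ l}) ↔
      ∃ w ∈ xorSpan l, bitVector (ZMod 2) n w = b := by
  induction l generalizing b with
  | nil => simp [xorSpan, bitVector_zero, eq_comm]
  | cons r l ih =>
    have h_insert : {x | x ∈ r :: l} = insert r {x | x ∈ l} := Set.ext fun _ => List.mem_cons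
    rw [h_insert, Set.image_insert_eq, Submodule.mem_span_insert]
    simp only [ih, xorSpan, List.mem_append, List.mem_map]
    constructor
    · rintro ⟨a, _, ⟨w, hw, rfl⟩, rfl⟩
      obtain rfl | rfl : a = 0 ∨ a = 1 := by revert a; decide
      · exact ⟨w, Or.inl hw, by rw [zero_smul, zero_add]⟩
      · exact ⟨r ^^^ w, Or.inr ⟨w, hw, rfl⟩, by rw [one_smul, bitVector_xor]⟩
    · rintro ⟨_, hw | ⟨w, hw, rfl⟩, rfl⟩
      · exact ⟨0, _, ⟨_, hw, rfl⟩, by rw [zero_smul, zero_add]⟩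
      · exact ⟨1, _, ⟨w, hw, rfl⟩, by rw [one_smul, bitVector_xor]⟩

/-- The hypotheses say that any three columns of the binary matrix with rows `l` are linearly
independent. -/
lemma exists_sum_bitVector_ne_zero {l : List ℕ}
    (h_one : ∀ k < n, ∃ r ∈ l, r.testBit k)
    (h_two : ∀ k < n, ∀ j < k, ∃ r ∈ l, r.testBit j ^^ r.testBit k)
    (h_three : ∀ k < n, ∀ j < k, ∀ i < j, ∃ r ∈ l, (r.testBit i ^^ r.testBit j) ^^ r.testBit k)
    {s : Finset (Fin n)} (hs : s.Nonempty) (h_card : s.card ≤ 3) :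
    ∃ r ∈ l, ∑ j ∈ s, bitVector (ZMod 2) n r j ≠ 0 := by
  obtain ⟨k, hk⟩ : ∃ k, s.card = k := ⟨_, rfl⟩
  have h_pos : 0 < k := hk ▸ hs.card_pos
  have h_le : k ≤ 3 := hk ▸ h_card
  have h_mono := (s.orderEmbOfFin hk).strictMono
  rw [← s.map_orderEmbOfFin_univ hk]
  generalize s.orderEmbOfFin hk = f at h_mono
  have h_xor : ∀ a b : Bool, ((if a then 1 else 0) + (if b then 1 else 0) : ZMod 2) =
      if a ^^ b then 1 else 0 := by decide
  interval_cases k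
  · obtain ⟨r, hr, h⟩ := h_one _ (f 0).2
    refine ⟨r, hr, ?_⟩
    simp only [Finset.sum_map, Fin.sum_univ_one, RelEmbedding.coe_toEmbedding, bitVector, h,
      if_true]
    exact one_ne_zero
  · obtain ⟨r, hr, h⟩ := h_two _ (f 1).2 _ (h_mono (by decide : (0 : Fin 2) < 1))
    refine ⟨r, hr, ?_⟩
    simp only [Finset.sum_map, Fin.sum_univ_two, RelEmbedding.coe_toEmbedding, bitVector, h_xor, h,
      if_true]
    exact one_ne_zero
  · obtain ⟨r, hr, h⟩ := h_three _ (f 2).2 _ (h_mono (by decide : (1 : Fin 3) < 2)) _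
      (h_mono (by decide : (0 : Fin 3) < 1))
    refine ⟨r, hr, ?_⟩
    simp only [Finset.sum_map, Fin.sum_univ_three, RelEmbedding.coe_toEmbedding, bitVector, h_xor,
      h, if_true]
    exact one_ne_zero

end BitVectors

section ResidueCode

/-- The vector with entries in `{0, 1, 2, 3}` whose low and high bit planes are `p.1` and `p.2`. -/
def quaternaryVector (n : ℕ) (p : ℕ × ℕ) : Fin n → ℤ :=
  bitVector ℤ n p.1 + (2 : ℤ) • bitVector ℤ n p.2

/-- The `ℤ/4ℤ`-code generated by a list of vectors, given by their bit planes. -/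
def quaternarySpan (n : ℕ) (l : List (ℕ × ℕ)) : Submodule ℤ (Fin n → ℤ) :=
  Submodule.span ℤ (quaternaryVector n '' {p | p ∈ l})

lemma residue_quaternaryVector (n : ℕ) (p : ℕ × ℕ) :
    residue (quaternaryVector n p) = bitVector (ZMod 2) n p.1 := by
  rw [quaternaryVector, map_add, residue_bitVector, residue_eq_zero_iff.2 ⟨_, rfl⟩, add_zero]

lemma residueCode_quaternarySpan (n : ℕ) (l : List (ℕ × ℕ)) :
    residueCode (quaternarySpan n l) =
      Submodule.span (ZMod 2) (bitVector (ZMod 2) n '' {r | r ∈ l.map Prod.fst}) := by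
  have h_image : {r | r ∈ l.map Prod.fst} = Prod.fst '' {p | p ∈ l} :=
    Set.ext fun _ => List.mem_map
  rw [residueCode, quaternarySpan, Submodule.map_span, h_image, Set.image_image, Set.image_image]
  simp only [residue_quaternaryVector]

end ResidueCode

section LengthFortyOne

/-- A generator matrix, as bit planes (the lowest bit is the first coordinate), of a self-orthogonal
`ℤ/4ℤ`-code of length `41`. Its residue code is a binary `[41, 9]` code with weights in
`{16, 20, 24, 28}` and dual distance `4`. -/
def generators41 : List (ℕ × ℕ) :=
  [(2045703044097, 0),
   (1893424068610, 0),
   (1622183572484, 1),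
   (2143781776392, 3),
   (2121826294800, 6),
   (716867789344, 10),
   (1010322515520, 51),
   (519144909440, 28),
   (375076893440, 165)]

/-- A characteristic vector of norm `17` of the self-dual code extending `generators41`; its nonzero
entries are `±1`. -/
def characteristicVector41 : Fin 41 → ℤ :=
  bitVector ℤ 41 292918395024 - bitVector ℤ 41 11592

/-- The self-dual `ℤ/4ℤ`-code of length `41` extending `generators41`. -/
def code41 : Submodule ℤ (Fin 41 → ℤ) :=
  selfDualExtension (quaternarySpan 41 generators41)

lemma four_dvd_dotProduct_generators41 :
    ∀ x ∈ quaternaryVector 41 '' {p | p ∈ generators41},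
      ∀ y ∈ quaternaryVector 41 '' {p | p ∈ generators41}, 4 ∣ x ⬝ᵥ y := by
  have h_gram : ∀ p ∈ generators41, ∀ q ∈ generators41,
      4 ∣ quaternaryVector 41 p ⬝ᵥ quaternaryVector 41 q := by decide +kernel
  rintro _ ⟨p, hp, rfl⟩ _ ⟨q, hq, rfl⟩
  exact h_gram p hp q hq

lemma quaternarySpan_generators41_le_quaternaryDual :
    quaternarySpan 41 generators41 ≤ quaternaryDual (quaternarySpan 41 generators41) :=
  span_le_quaternaryDual four_dvd_dotProduct_generators41

lemma isSelfDual_code41 : IsSelfDual code41 :=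
  isSelfDual_selfDualExtension quaternarySpan_generators41_le_quaternaryDual

lemma residueCode_code41 :
    residueCode code41 =
      Submodule.span (ZMod 2) (bitVector (ZMod 2) 41 '' {r | r ∈ generators41.map Prod.fst}) :=
  (residueCode_selfDualExtension quaternarySpan_generators41_le_quaternaryDual).trans
    (residueCode_quaternarySpan 41 generators41)

lemma hammingNorm_mem_Icc_of_mem_residueCode_code41 {b : Fin 41 → ZMod 2}
    (hb : b ∈ residueCode code41) (hb0 : b ≠ 0) : hammingNorm b ∈ Finset.Icc 16 28 := by
  have h_weights : ∀ w ∈ xorSpan (generators41.map Prod.fst), w = 0 ∨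
      (Finset.univ.filter fun j : Fin 41 => w.testBit j).card ∈ Finset.Icc 16 28 := by
    decide +kernel
  rw [residueCode_code41] at hb
  obtain ⟨w, hw, rfl⟩ := mem_span_bitVector_iff.1 hb
  rw [hammingNorm_bitVector]
  refine (h_weights w hw).resolve_left ?_
  rintro rfl
  exact hb0 (bitVector_zero _)

lemma four_le_hammingNorm_of_mem_dualCode_residueCode_code41 {b : Fin 41 → ZMod 2}
    (hb : b ∈ dualCode (residueCode code41)) (hb0 : b ≠ 0) : 4 ≤ hammingNorm b := by
  rw [residueCode_code41] at hb
  refine lt_hammingNorm_of_mem_dualCode (fun s hs h_card => ?_) hb hb0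
  obtain ⟨r, hr, h_sum⟩ : ∃ r ∈ generators41.map Prod.fst, ∑ j ∈ s, bitVector (ZMod 2) 41 r j ≠ 0 :=
    exists_sum_bitVector_ne_zero (by decide +kernel) (by decide +kernel) (by decide +kernel) hs
      h_card
  exact ⟨_, Submodule.subset_span ⟨r, hr, rfl⟩, h_sum⟩

lemma isCharacteristic_characteristicVector41 :
    IsCharacteristic code41 characteristicVector41 := by
  have h_generators : ∀ p ∈ generators41,
      8 ∣ 2 * (characteristicVector41 ⬝ᵥ quaternaryVector 41 p) -
        quaternaryVector 41 p ⬝ᵥ quaternaryVector 41 p := by decide +kernel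
  -- the witness is the sum of the first, second, third and sixth rows
  have h_residue : ∃ w ∈ xorSpan (generators41.map Prod.fst),
      bitVector (ZMod 2) 41 w = residue (characteristicVector41 - 1) :=
    ⟨1906104848935, by decide +kernel, by decide +kernel⟩
  refine .selfDualExtension quaternarySpan_generators41_le_quaternaryDual ?_ ?_
  · refine isCharacteristic_span four_dvd_dotProduct_generators41 ?_
    rintro _ ⟨p, hp, rfl⟩
    exact h_generators p hp
  · rw [residueCode_quaternarySpan]
    exact mem_span_bitVector_iff.2 h_residue

lemma isLeast_dotProduct_self_characteristic_code41 :
    IsLeast ((fun u => u ⬝ᵥ u) '' {u | IsCharacteristic code41 u}) 17 := by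
  refine ⟨⟨_, isCharacteristic_characteristicVector41, by decide +kernel⟩, ?_⟩
  rintro _ ⟨u, hu, rfl⟩
  have h_weight : ∀ b ∈ residueCode code41, hammingNorm b ≤ 28 := fun b hb => by
    rcases eq_or_ne b 0 with rfl | hb0
    · simp
    · exact (Finset.mem_Icc.1 (hammingNorm_mem_Icc_of_mem_residueCode_code41 hb hb0)).2
  have h_bound : 41 ≤ u ⬝ᵥ u + 28 := hu.card_le isSelfDual_code41 h_weight
  have h_modEq : u ⬝ᵥ u ≡ 41 [ZMOD 8] := hu.dotProduct_self_modEq isSelfDual_code41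
  rw [Int.ModEq] at h_modEq
  change 17 ≤ u ⬝ᵥ u
  omega

end LengthFortyOne

theorem exists_unimodular_dim41_min4_sigma17 :
    ∃ L : Set (EuclideanSpace ℝ (Fin 41)),
      IsUnimodularLattice L ∧ IsOddLattice L ∧ HasMinNorm L 4 ∧ HasSigma L 17 := by
  have h_odd : Odd 41 := by decide
  refine ⟨constructionA code41, isUnimodularLattice_constructionA isSelfDual_code41,
    isOddLattice_constructionA isSelfDual_code41 h_odd, ?_, ?_⟩
  · refine hasMinNorm_constructionA isSelfDual_code41 (fun b hb hb0 => ?_) fun b =>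
      four_le_hammingNorm_of_mem_dualCode_residueCode_code41
    exact (Finset.mem_Icc.1 (hammingNorm_mem_Icc_of_mem_residueCode_code41 hb hb0)).1
  · exact_mod_cast hasSigma_constructionA isSelfDual_code41 h_odd
      isLeast_dotProduct_self_characteristic_code41
end
end
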